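/- Assume λ₁ > μ₁c₁, λ₂ > μ₂c₂, and p₁p₂ < 1. Let x₁, x₂ be real numbers with 0 < x₁ < x₂ < 1, Δ₂(x₁) = Δ₂(x₂) = 0, and Δ₂(x) < 0 for all x ∈ (x₁,x₂). Let π be an invariant distribution of the random walk (m̄_c(t)). Then π(0,0) = (λ₁ + λ₂p₂ − (μ₁c₁ + μ₂c₂p₂)) / ((λ₁ + λ₂p₂)·φ_Y(1)), where φ_Y(1) = exp((1/π)·∫_{x₁}^{x₂} (μ₁c₁x² − λ₁)·Θ_Y(x)/(x·h₁(x,1)) dx) and Θ_Y(x) = arctan((1−p₁p₂)·√(−Δ₂(x)) / ((1−p₁p₂)·(μ₁c₁x² − (λ₁+λ₂+μ₁c₁+μ₂c₂)x + λ₁) − 2R_Y(x))). -/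

import Mathlib

/-- Δ₂(x) = (μ₁c₁x² − (λ₁+λ₂+μ₁c₁+μ₂c₂)x + λ₁)² − 4μ₂c₂λ₂x² -/
noncomputable def Delta2 (la1 la2 mu1 mu2 c1 c2 : ℝ) (x : ℝ) : ℝ :=
  (mu1 * c1 * x ^ 2 - (la1 + la2 + mu1 * c1 + mu2 * c2) * x + la1) ^ 2
    - 4 * mu2 * c2 * la2 * x ^ 2

/-- R_Y(x) = p₁μ₁c₁(1−p₂)x² + (p₁p₂(μ₁c₁+μ₂c₂) − (1−p₂)(λ₂+λ₁p₁))x − p₂(λ₂+λ₁p₁) -/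
noncomputable def RY (la1 la2 mu1 mu2 c1 c2 p1 p2 : ℝ) (x : ℝ) : ℝ :=
  p1 * mu1 * c1 * (1 - p2) * x ^ 2
    + (p1 * p2 * (mu1 * c1 + mu2 * c2) - (1 - p2) * (la2 + la1 * p1)) * x
    - p2 * (la2 + la1 * p1)

/-- The kernel h₁(x,y) restricted to real arguments. -/
noncomputable def h1r (la1 la2 mu1 mu2 c1 c2 : ℝ) (x y : ℝ) : ℝ :=
  -(mu1 * c1) * x ^ 2 * y - mu2 * c2 * x * y ^ 2
    + (la1 + la2 + mu1 * c1 + mu2 * c2) * x * y - la1 * y - la2 * x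

/-- Θ_Y(x), the argument function appearing in the solution of the
Riemann–Hilbert problem. -/
noncomputable def ThetaY (la1 la2 mu1 mu2 c1 c2 p1 p2 : ℝ) (x : ℝ) : ℝ :=
  Real.arctan ((1 - p1 * p2) * Real.sqrt (-(Delta2 la1 la2 mu1 mu2 c1 c2 x))
    / ((1 - p1 * p2) * (mu1 * c1 * x ^ 2 - (la1 + la2 + mu1 * c1 + mu2 * c2) * x + la1)
        - 2 * RY la1 la2 mu1 mu2 c1 c2 p1 p2 x))

/-- φ_Y(1) = exp((1/π)·∫_{x₁}^{x₂} (μ₁c₁x² − λ₁)Θ_Y(x)/(x·h₁(x,1)) dx). -/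
noncomputable def phiY1 (la1 la2 mu1 mu2 c1 c2 p1 p2 x1 x2 : ℝ) : ℝ :=
  Real.exp ((1 / Real.pi) * ∫ x in x1..x2,
    (mu1 * c1 * x ^ 2 - la1) * ThetaY la1 la2 mu1 mu2 c1 c2 p1 p2 x
      / (x * h1r la1 la2 mu1 mu2 c1 c2 x 1))

/-- π is an invariant (stationary) probability distribution of the random walk (m̄_c(t)):
nonnegative, sums to 1, and satisfies the balance equations. -/
def IsInvariantDist (la1 la2 mu1 mu2 l1 l2 p1 p2 : ℝ) (π : ℕ × ℕ → ℝ) : Prop :=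
  (∀ m, 0 ≤ π m) ∧ (∑' m : ℕ × ℕ, π m = 1) ∧
  ∀ m1 m2 : ℕ,
    π (m1, m2) * (mu1 * l1 + mu2 * l2
        + (la1 + p2 * la2 * (if m2 = 0 then 1 else 0)) * (if 0 < m1 then 1 else 0)
        + (la2 + p1 * la1 * (if m1 = 0 then 1 else 0)) * (if 0 < m2 then 1 else 0))
    = mu1 * l1 * π (m1 - 1, m2) * (if 0 < m1 then 1 else 0)
      + mu2 * l2 * π (m1, m2 - 1) * (if 0 < m2 then 1 else 0)
      + (la1 + p2 * la2 * (if m2 = 0 then 1 else 0)) * π (m1 + 1, m2)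
      + (la2 + p1 * la1 * (if m1 = 0 then 1 else 0)) * π (m1, m2 + 1)

/-!
Write `a = μ₁c₁`, `b = μ₂c₂`. With `J₁(x) = a x + λ₁ / x` and `J₂(y) = b y + λ₂ / y`, the kernel
vanishes at `(x, y)` iff `J₁(x) + J₂(y) = a + λ₁ + b + λ₂`, and at such points of the open bidisc
the functional equation of the generating function says that the two boundary generating functions
`Φ(y)`, `Ψ(x)` satisfy `Φ(y) = R(x, y) Ψ(x)` with the explicit factor `R` of `couplingRatio`, which
avoids the negative real axis. In the variable `w = J₂(y)`, the function `Φ` lives outside an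
ellipse around `0`, and `Ψ`, through `J₁(x) = a + λ₁ + b + λ₂ - w`, outside an ellipse around
`a + λ₁ + b + λ₂`; the two ellipses touch at `w = b + λ₂`, that is `x = y = 1`. Cauchy-type
integrals of `log R` along the images under `J₂` of two circles, an ellipse inside the first one and
an ellipse around it, write `R` as a quotient of a factor holomorphic outside the former and a
factor holomorphic inside the latter. Dividing them out glues `Φ` and `Ψ` to a bounded function on
the plane minus the touching point, which is constant by Riemann's and Liouville's theorems. Hence
`Φ(1) / Φ(0)` is the exponential of the Cauchy-type integral at `w = b + λ₂`. On the critical circle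
`b |y|² = λ₂` the ellipse collapses to a slit over which `x` runs through `[x₁, x₂]`, and the
integral becomes the one in `φ_Y(1)`.
-/

section KernelMethod

open Complex Metric Set Filter Topology
open scoped ComplexConjugate

/-! ### Generating functions -/

section GenFun

/-- The bivariate generating function `F(x, y) = ∑ π(i, j) xⁱ yʲ`, for complex arguments. -/
noncomputable def genFun (π : ℕ × ℕ → ℝ) (x y : ℂ) : ℂ :=
  ∑' k : ℕ × ℕ, (π k : ℂ) * x ^ k.1 * y ^ k.2

lemma genFun_comp_swap (π : ℕ × ℕ → ℝ) (x y : ℂ) : genFun (π ∘ Prod.swap) x y = genFun π y x := by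
  unfold genFun
  rw [← (Equiv.prodComm ℕ ℕ).tsum_eq]
  exact tsum_congr fun k => mul_right_comm _ _ _

lemma genFun_zero_zero (π : ℕ × ℕ → ℝ) : genFun π 0 0 = π (0, 0) := by
  rw [genFun, tsum_eq_single (0, 0)]
  · simp
  · rintro ⟨_ | i, _ | j⟩ h <;> simp_all

lemma genFun_one_one (π : ℕ × ℕ → ℝ) : genFun π 1 1 = (∑' k, π k : ℝ) := by
  simp [genFun, ofReal_tsum]

variable {π : ℕ × ℕ → ℝ} {x y : ℂ}

lemma norm_genFun_term_le (h0 : ∀ k, 0 ≤ π k) (hx : ‖x‖ ≤ 1) (hy : ‖y‖ ≤ 1) (k : ℕ × ℕ) :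
    ‖(π k : ℂ) * x ^ k.1 * y ^ k.2‖ ≤ π k := by
  rw [norm_mul, norm_mul, norm_pow, norm_pow, norm_real, Real.norm_of_nonneg (h0 k), mul_assoc]
  exact mul_le_of_le_one_right (h0 k)
    (mul_le_one₀ (pow_le_one₀ (norm_nonneg _) hx) (by positivity) (pow_le_one₀ (norm_nonneg _) hy))

lemma hasSum_genFun (h0 : ∀ k, 0 ≤ π k) (hs : Summable π) (hx : ‖x‖ ≤ 1) (hy : ‖y‖ ≤ 1) :
    HasSum (fun k : ℕ × ℕ => (π k : ℂ) * x ^ k.1 * y ^ k.2) (genFun π x y) :=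
  (Summable.of_norm_bounded hs (norm_genFun_term_le h0 hx hy)).hasSum

lemma continuousOn_genFun_left (h0 : ∀ k, 0 ≤ π k) (hs : Summable π) (hy : ‖y‖ ≤ 1) :
    ContinuousOn (fun x => genFun π x y) (closedBall 0 1) :=
  continuousOn_tsum (fun _ => by fun_prop) hs
    fun k _ hx => norm_genFun_term_le h0 (mem_closedBall_zero_iff.1 hx) hy k

lemma continuousOn_genFun_right (h0 : ∀ k, 0 ≤ π k) (hs : Summable π) (hx : ‖x‖ ≤ 1) :
    ContinuousOn (genFun π x) (closedBall 0 1) :=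
  continuousOn_tsum (fun _ => by fun_prop) hs
    fun k _ hy => norm_genFun_term_le h0 hx (mem_closedBall_zero_iff.1 hy) k

lemma differentiableOn_genFun_right (h0 : ∀ k, 0 ≤ π k) (hs : Summable π) (hx : ‖x‖ ≤ 1) :
    DifferentiableOn ℂ (genFun π x) (ball 0 1) :=
  differentiableOn_tsum_of_summable_norm hs (fun _ => by fun_prop) isOpen_ball
    fun k _ hy => norm_genFun_term_le h0 hx (mem_ball_zero_iff.1 hy).le k

lemma prodMap_succ_injective {α : Type*} :
    Function.Injective (fun k : ℕ × α => (k.1 + 1, k.2)) := by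
  rintro ⟨i, j⟩ ⟨i', j'⟩ h
  simpa using h

lemma hasSum_prodMap_succ_iff {α M : Type*} [AddCommMonoid M] [TopologicalSpace M]
    {g : ℕ × α → M} {s : M} (hg : ∀ j, g (0, j) = 0) :
    HasSum (fun k : ℕ × α => g (k.1 + 1, k.2)) s ↔ HasSum g s := by
  refine prodMap_succ_injective.hasSum_iff ?_
  rintro ⟨_ | i, j⟩ hk
  · exact hg j
  · exact absurd ⟨(i, j), rfl⟩ hk

lemma hasSum_pred_fst {α M : Type*} [AddCommMonoid M] [TopologicalSpace M]
    {g : ℕ × α → M} {s : M} (h : HasSum g s) :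
    HasSum (fun k : ℕ × α => if 0 < k.1 then g (k.1 - 1, k.2) else 0) s :=
  (hasSum_prodMap_succ_iff (by simp)).1 (by simpa using h)

lemma hasSum_pred_snd {α M : Type*} [AddCommMonoid M] [TopologicalSpace M]
    {g : α × ℕ → M} {s : M} (h : HasSum g s) :
    HasSum (fun k : α × ℕ => if 0 < k.2 then g (k.1, k.2 - 1) else 0) s := by
  rw [← (Equiv.prodComm ℕ α).hasSum_iff] at h ⊢
  simpa [Function.comp_def] using hasSum_pred_fst h

lemma hasSum_genFun_succ_fst (h0 : ∀ k, 0 ≤ π k) (hs : Summable π) (hx : ‖x‖ ≤ 1)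
    (hy : ‖y‖ ≤ 1) :
    HasSum (fun k : ℕ × ℕ => (π (k.1 + 1, k.2) : ℂ) * x ^ (k.1 + 1) * y ^ k.2)
      (genFun π x y - genFun π 0 y) := by
  have h := (hasSum_genFun h0 hs hx hy).sub (hasSum_genFun h0 hs (x := 0) (by simp) hy)
  simpa using (hasSum_prodMap_succ_iff (by simp)).2 h

lemma hasSum_genFun_succ_snd (h0 : ∀ k, 0 ≤ π k) (hs : Summable π) (hx : ‖x‖ ≤ 1)
    (hy : ‖y‖ ≤ 1) :
    HasSum (fun k : ℕ × ℕ => (π (k.1, k.2 + 1) : ℂ) * x ^ k.1 * y ^ (k.2 + 1))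
      (genFun π x y - genFun π x 0) := by
  have h := hasSum_genFun_succ_fst (π := π ∘ Prod.swap) (fun k => h0 k.swap)
    ((Equiv.prodComm ℕ ℕ).summable_iff.2 hs) hy hx
  rw [genFun_comp_swap, genFun_comp_swap] at h
  exact ((Equiv.prodComm ℕ ℕ).hasSum_iff.2 h).congr_fun fun k => mul_right_comm _ _ _

end GenFun

/-! ### The functional equation of an invariant distribution -/

section BoundaryRelation

variable {la1 la2 mu1 mu2 c1 c2 p1 p2 : ℝ} {π : ℕ × ℕ → ℝ} {x y : ℂ}

lemma IsInvariantDist.summable (hπ : IsInvariantDist la1 la2 mu1 mu2 c1 c2 p1 p2 π) :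
    Summable π := by
  by_contra h
  simpa [tsum_eq_zero_of_not_summable h] using hπ.2.1

lemma IsInvariantDist.comp_swap (hπ : IsInvariantDist la1 la2 mu1 mu2 c1 c2 p1 p2 π) :
    IsInvariantDist la2 la1 mu2 mu1 c2 c1 p2 p1 (π ∘ Prod.swap) := by
  refine ⟨fun k => hπ.1 k.swap, ((Equiv.prodComm ℕ ℕ).tsum_eq π).trans hπ.2.1, fun i j => ?_⟩
  simp only [Function.comp_apply, Prod.swap_prod_mk]
  linear_combination hπ.2.2 j i

lemma IsInvariantDist.genFun_one_one (hπ : IsInvariantDist la1 la2 mu1 mu2 c1 c2 p1 p2 π) :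
    genFun π 1 1 = 1 := by
  rw [_root_.genFun_one_one, hπ.2.1, ofReal_one]

lemma IsInvariantDist.functional_equation
    (hπ : IsInvariantDist la1 la2 mu1 mu2 c1 c2 p1 p2 π) (hx : ‖x‖ ≤ 1) (hy : ‖y‖ ≤ 1) :
    (y * (x - 1) * (la1 - mu1 * c1 * x) + x * (y - 1) * (la2 - mu2 * c2 * y)) * genFun π x y
      = (la1 * y * (x - 1) - p1 * la1 * x * (y - 1)) * genFun π 0 y
        + (la2 * x * (y - 1) - p2 * la2 * y * (x - 1)) * genFun π x 0
        + (p2 * la2 * y * (x - 1) + p1 * la1 * x * (y - 1)) * genFun π 0 0 := by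
  have h0 := hπ.1
  have hs := hπ.summable
  have z : ‖(0 : ℂ)‖ ≤ 1 := by simp
  have hF := hasSum_genFun h0 hs hx hy
  have hG := hasSum_genFun h0 hs z hy
  have hH := hasSum_genFun h0 hs hx z
  have h00 := hasSum_genFun h0 hs z z
  have departures := (((((hF.mul_left ((mu1 * c1 + mu2 * c2 : ℝ) : ℂ)).add
    ((hF.sub hG).mul_left (la1 : ℂ))).add ((hH.sub h00).mul_left ((p2 * la2 : ℝ) : ℂ))).add
    ((hF.sub hH).mul_left (la2 : ℂ))).add
    ((hG.sub h00).mul_left ((p1 * la1 : ℝ) : ℂ))).mul_left (x * y)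
  have arrivals := ((((hasSum_pred_fst hF).mul_left (mu1 * c1 * x ^ 2 * y)).add
    ((hasSum_pred_snd hF).mul_left (mu2 * c2 * x * y ^ 2))).add
    (((hasSum_genFun_succ_fst h0 hs hx hy).mul_left (la1 * y)).add
      ((hasSum_genFun_succ_fst h0 hs hx z).mul_left (p2 * la2 * y)))).add
    (((hasSum_genFun_succ_snd h0 hs hx hy).mul_left (la2 * x)).add
      ((hasSum_genFun_succ_snd h0 hs z hy).mul_left (p1 * la1 * x)))
  have balance := departures.unique (arrivals.congr_fun ?_)
  · push_cast at balance
    linear_combination balance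
  · rintro ⟨i, j⟩
    have hb := congrArg (fun t : ℝ => (t : ℂ)) (hπ.2.2 i j)
    push_cast at hb
    rcases i with _ | i <;> rcases j with _ | j <;> simp [pow_succ] at hb ⊢
    · linear_combination (x * y) * hb
    · linear_combination (x * y * y ^ j * y) * hb
    · linear_combination (x * y * x ^ i * x) * hb
    · linear_combination (x * y * y ^ j * y * x ^ i * x) * hb

lemma eq_at_one_of_eqOn_punctured_ball {f g : ℂ → ℂ} (hf : ContinuousWithinAt f (ball 0 1) 1)
    (hg : ContinuousWithinAt g (ball 0 1) 1) (h : ∀ z, z ≠ 0 → ‖z‖ < 1 → f z = g z) :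
    f 1 = g 1 := by
  have h1 : (1 : ℂ) ∈ closure (ball 0 1) := by
    rw [closure_ball _ one_ne_zero, mem_closedBall_zero_iff, norm_one]
  have : (𝓝[ball (0 : ℂ) 1] 1).NeBot := mem_closure_iff_nhdsWithin_neBot.1 h1
  refine tendsto_nhds_unique_of_eventuallyEq hf hg ?_
  filter_upwards [self_mem_nhdsWithin, nhdsWithin_le_nhds (isOpen_ne.mem_nhds one_ne_zero)]
    with z hz hz0 using h z hz0 (mem_ball_zero_iff.1 hz)

lemma IsInvariantDist.marginal_drift (hπ : IsInvariantDist la1 la2 mu1 mu2 c1 c2 p1 p2 π) :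
    (la1 - mu1 * c1 : ℂ) = la1 * genFun π 0 1 - p2 * la2 * (genFun π 1 0 - genFun π 0 0) := by
  have mem_one : (1 : ℂ) ∈ closedBall 0 1 := by simp
  have cont_one := (continuousOn_genFun_left hπ.1 hπ.summable (y := 1) (by simp) 1 mem_one).mono
    ball_subset_closedBall
  have cont_zero := (continuousOn_genFun_left hπ.1 hπ.summable (y := 0) (by simp) 1 mem_one).mono
    ball_subset_closedBall
  have h := eq_at_one_of_eqOn_punctured_ball
    (f := fun x => (la1 - mu1 * c1 * x) * genFun π x 1)
    (g := fun x => la1 * genFun π 0 1 - p2 * la2 * (genFun π x 0 - genFun π 0 0))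
    (.mul (by fun_prop) cont_one)
    (.sub (by fun_prop) (.mul (by fun_prop) (cont_zero.sub (by fun_prop)))) ?_
  · simpa [hπ.genFun_one_one] using h
  · intro x _ hx
    have hx1 : x - 1 ≠ 0 := sub_ne_zero.2 (by rintro rfl; simp at hx)
    apply mul_left_cancel₀ hx1
    linear_combination hπ.functional_equation hx.le (y := 1) (by simp)

/-- The affine image of `y ↦ F(0, y)` whose product with `v + p₁u`, where `u = λ₁ - μ₁c₁x` and
`v = λ₂ - μ₂c₂y`, is symmetric under exchanging the coordinates on the zero set of the kernel. -/
noncomputable def boundaryGenFun (la1 la2 p1 p2 : ℝ) (π : ℕ × ℕ → ℝ) (y : ℂ) : ℂ :=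
  la1 * (1 - p1 * p2) * genFun π 0 y + p2 * (p1 * la1 + la2) * π (0, 0)

lemma boundaryGenFun_zero :
    boundaryGenFun la1 la2 p1 p2 π 0 = (la1 + la2 * p2) * π (0, 0) := by
  rw [boundaryGenFun, genFun_zero_zero]
  ring

lemma IsInvariantDist.boundaryGenFun_one
    (hπ : IsInvariantDist la1 la2 mu1 mu2 c1 c2 p1 p2 π) :
    boundaryGenFun la1 la2 p1 p2 π 1 = la1 + la2 * p2 - (mu1 * c1 + mu2 * c2 * p2) := by
  have h1 := hπ.marginal_drift
  have h2 := hπ.comp_swap.marginal_drift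
  simp only [genFun_comp_swap] at h2
  rw [boundaryGenFun, ← genFun_zero_zero]
  linear_combination -h1 - p2 * h2

lemma IsInvariantDist.continuousOn_boundaryGenFun
    (hπ : IsInvariantDist la1 la2 mu1 mu2 c1 c2 p1 p2 π) :
    ContinuousOn (boundaryGenFun la1 la2 p1 p2 π) (closedBall 0 1) :=
  (continuousOn_const.mul (continuousOn_genFun_right hπ.1 hπ.summable (by simp))).add
    continuousOn_const

lemma IsInvariantDist.differentiableOn_boundaryGenFun
    (hπ : IsInvariantDist la1 la2 mu1 mu2 c1 c2 p1 p2 π) :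
    DifferentiableOn ℂ (boundaryGenFun la1 la2 p1 p2 π) (ball 0 1) :=
  ((differentiableOn_genFun_right hπ.1 hπ.summable (by simp)).const_mul _).add_const _

lemma IsInvariantDist.boundary_relation
    (hπ : IsInvariantDist la1 la2 mu1 mu2 c1 c2 p1 p2 π) (hx : ‖x‖ < 1) (hy0 : y ≠ 0)
    (hy : ‖y‖ ≤ 1)
    (hxy : y * (x - 1) * (la1 - mu1 * c1 * x) + x * (y - 1) * (la2 - mu2 * c2 * y) = 0) :
    (la2 - mu2 * c2 * y + p1 * (la1 - mu1 * c1 * x)) * boundaryGenFun la1 la2 p1 p2 π y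
      = (la1 - mu1 * c1 * x + p2 * (la2 - mu2 * c2 * y))
        * boundaryGenFun la2 la1 p2 p1 (π ∘ Prod.swap) x := by
  have hF := hπ.functional_equation hx.le hy
  rw [hxy, zero_mul] at hF
  have hx' : x - 1 ≠ 0 := sub_ne_zero.2 (by rintro rfl; simp at hx)
  simp only [boundaryGenFun, genFun_comp_swap, Function.comp_apply, Prod.swap_prod_mk,
    ← genFun_zero_zero]
  apply mul_left_cancel₀ (mul_ne_zero hy0 hx')
  linear_combination -(1 - p1 * p2) * (la2 - mu2 * c2 * y) * hF
    + (p1 * (la1 * (1 - p1 * p2) * genFun π 0 y + p2 * (p1 * la1 + la2) * genFun π 0 0)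
      - (la2 * (1 - p2 * p1) * genFun π x 0 + p1 * (p2 * la2 + la1) * genFun π 0 0)) * hxy

end BoundaryRelation
/-! ### The Joukowski map and its inverse -/

section Joukowski

/-- The (rescaled) Joukowski map `x ↦ ax + l/x`; the kernel is
`xy (λ₁ + λ₂ + μ₁c₁ + μ₂c₂ - J(x) - J(y))` with `J` taken for the parameters of each coordinate. -/
def joukowski {K : Type*} [Field K] (a l x : K) : K := a * x + l / x

/-- The semi-major axis of the ellipse through `w` with foci `±2√(al)`. -/
noncomputable def semiMajor (a l : ℝ) (w : ℂ) : ℝ :=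
  (‖w - (2 * √(a * l) : ℝ)‖ + ‖w + (2 * √(a * l) : ℝ)‖) / 2

/-- The root of smaller modulus of `a x² - w x + l`, i.e. the inverse of `joukowski a l` on the
disc `a |x|² < l`. The square root has its cut on the preimage of the segment between
`±2√(al)`. -/
noncomputable def smallRoot (a l : ℝ) (w : ℂ) : ℂ :=
  w * (1 - (1 - 4 * a * l / w ^ 2) ^ (2⁻¹ : ℂ)) / (2 * a)

variable {a l : ℝ} {x w : ℂ}

lemma ofReal_joukowski (a l x : ℝ) : ((joukowski a l x : ℝ) : ℂ) = joukowski (a : ℂ) l x := by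
  simp [joukowski]

lemma joukowski_one {K : Type*} [Field K] (a l : K) : joukowski a l 1 = a + l := by
  simp [joukowski]

lemma differentiableAt_joukowski (a l : ℂ) (hx : x ≠ 0) :
    DifferentiableAt ℂ (joukowski a l) x := by
  unfold joukowski
  fun_prop (disch := assumption)

lemma joukowski_sq_sub {a l x : ℝ} (hx : x ≠ 0) :
    joukowski a l x ^ 2 - 4 * (a * l) = (a * x - l / x) ^ 2 := by
  unfold joukowski
  field_simp
  ring

lemma two_mul_sqrt_lt_joukowski {a l x : ℝ} (ha : 0 ≤ a) (hl : 0 ≤ l) (hx : 0 < x)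
    (h : a * x ^ 2 ≠ l) : 2 * √(a * l) < joukowski a l x := by
  refine lt_of_pow_lt_pow_left₀ 2 (by unfold joukowski; positivity) ?_
  have : a * x - l / x ≠ 0 := by
    rw [sub_ne_zero, Ne, eq_div_iff hx.ne']
    exact fun h' => h (by linarith)
  rw [mul_pow, Real.sq_sqrt (mul_nonneg ha hl)]
  linarith [joukowski_sq_sub (a := a) (l := l) hx.ne', sq_pos_of_ne_zero this]

lemma mul_sq_lt_of_le_one {x : ℝ} (ha : 0 < a) (hal : a < l) (hx0 : 0 ≤ x) (hx1 : x ≤ 1) :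
    a * x ^ 2 < l :=
  (mul_le_of_le_one_right ha.le (pow_le_one₀ hx0 hx1)).trans_lt hal

lemma strictAntiOn_joukowski (ha : 0 < a) :
    StrictAntiOn (joukowski a l) {x | 0 < x ∧ a * x ^ 2 ≤ l} := by
  rintro x ⟨hx, -⟩ y ⟨hy, hyl⟩ hxy
  have hl : a * x * y < l := by nlinarith [mul_pos ha hy]
  have : joukowski a l x - joukowski a l y = (y - x) * (l - a * x * y) / (x * y) := by
    unfold joukowski
    field_simp
    ring
  have : 0 < (y - x) * (l - a * x * y) / (x * y) :=
    div_pos (mul_pos (sub_pos.2 hxy) (sub_pos.2 hl)) (mul_pos hx hy)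
  linarith

lemma continuous_semiMajor (a l : ℝ) : Continuous (semiMajor a l) := by
  unfold semiMajor
  fun_prop

lemma norm_le_semiMajor (a l : ℝ) (w : ℂ) : ‖w‖ ≤ semiMajor a l w := by
  have h := norm_add_le (w - (2 * √(a * l) : ℝ)) (w + (2 * √(a * l) : ℝ))
  rw [sub_add_add_cancel, ← two_mul, norm_mul, Complex.norm_two] at h
  unfold semiMajor
  linarith

lemma semiMajor_sq (h : 0 ≤ a * l) (w : ℂ) :
    semiMajor a l w ^ 2 = (‖w‖ ^ 2 + 4 * (a * l) + ‖w ^ 2 - 4 * (a * l)‖) / 2 := by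
  set c := 2 * √(a * l) with hc
  have hc2 : c ^ 2 = 4 * (a * l) := by rw [hc, mul_pow, Real.sq_sqrt h]; norm_num
  have hc2' : (c : ℂ) ^ 2 = 4 * (a * l) := by exact_mod_cast hc2
  have hprod : w ^ 2 - 4 * (a * l) = (w - c) * (w + c) := by rw [← hc2']; ring
  have hpar := parallelogram_law_with_norm ℝ w c
  rw [norm_real, Real.norm_eq_abs, sq_abs] at hpar
  rw [hprod, norm_mul, semiMajor, ← hc]
  linear_combination hpar / 4 + hc2 / 2

lemma semiMajor_joukowski (ha : 0 ≤ a) (hl : 0 ≤ l) (hx : x ≠ 0) :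
    semiMajor a l (joukowski (a : ℂ) l x) = joukowski a l ‖x‖ := by
  have hx' : ‖x‖ ≠ 0 := norm_ne_zero_iff.2 hx
  refine (sq_eq_sq₀ (by unfold semiMajor; positivity) (by unfold joukowski; positivity)).1 ?_
  have hdiscr : joukowski (a : ℂ) l x ^ 2 - 4 * (a * l) = (a * x - l / x) ^ 2 := by
    unfold joukowski
    field_simp
    ring
  have hpar := parallelogram_law_with_norm ℝ (a * x) (l / x)
  rw [norm_mul, norm_div, norm_real, norm_real, Real.norm_of_nonneg ha,
    Real.norm_of_nonneg hl] at hpar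
  rw [semiMajor_sq (mul_nonneg ha hl), hdiscr, norm_pow]
  unfold joukowski
  field_simp at hpar ⊢
  linear_combination hpar

lemma norm_joukowski_le (ha : 0 ≤ a) (hl : 0 ≤ l) (hx : x ≠ 0) :
    ‖joukowski (a : ℂ) l x‖ ≤ joukowski a l ‖x‖ :=
  (norm_le_semiMajor a l _).trans (semiMajor_joukowski ha hl hx).le

lemma ne_zero_of_two_mul_sqrt_lt_semiMajor (hw : 2 * √(a * l) < semiMajor a l w) : w ≠ 0 := by
  rintro rfl
  simp [semiMajor, abs_of_nonneg (Real.sqrt_nonneg _)] at hw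

lemma discr_mem_slitPlane (h : 0 ≤ a * l) (hw : 2 * √(a * l) < semiMajor a l w) :
    1 - 4 * a * l / w ^ 2 ∈ slitPlane := by
  have hw0 := ne_zero_of_two_mul_sqrt_lt_semiMajor hw
  by_contra hz
  rw [mem_slitPlane_iff, not_or, not_lt, not_not, sub_re, sub_im, one_re, one_im] at hz
  obtain ⟨t, ht, htw⟩ : ∃ t : ℝ, 1 ≤ t ∧ 4 * a * l / w ^ 2 = t :=
    ⟨_, sub_nonpos.1 hz.1, Complex.ext (ofReal_re _).symm (by simpa using hz.2)⟩
  have hwt : w ^ 2 = ((4 * (a * l) / t : ℝ) : ℂ) := by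
    have : (t : ℂ) ≠ 0 := by exact_mod_cast (one_pos.trans_le ht).ne'
    push_cast
    field_simp at htw ⊢
    linear_combination -htw
  have hst : 4 * (a * l) / t ≤ 4 * (a * l) := div_le_self (by positivity) ht
  have : semiMajor a l w ^ 2 = (2 * √(a * l)) ^ 2 := by
    rw [semiMajor_sq h, mul_pow, Real.sq_sqrt h, ← norm_pow, hwt, norm_real,
      Real.norm_of_nonneg (by positivity), show ((4 * (a * l) / t : ℝ) : ℂ) - 4 * (a * l)
        = ((4 * (a * l) / t - 4 * (a * l) : ℝ) : ℂ) by push_cast; ring, norm_real,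
      Real.norm_of_nonpos (sub_nonpos.2 hst)]
    ring
  exact absurd this (pow_lt_pow_left₀ hw (by positivity) two_ne_zero).ne'

lemma re_cpow_inv_two_pos {z : ℂ} (hz : z ∈ slitPlane) : 0 < (z ^ (2⁻¹ : ℂ)).re := by
  rw [cpow_inv_two_re]
  refine Real.sqrt_pos.2 (half_pos ?_)
  rcases mem_slitPlane_iff.1 hz with h | h
  · positivity
  · linarith [neg_abs_le z.re, abs_re_lt_norm.2 h]

lemma exists_conjugate_root (ha : 0 < a) (hl : 0 < l) (hw : 2 * √(a * l) < semiMajor a l w) :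
    ∃ x' : ℂ, a * (smallRoot a l w * x') = l ∧ a * (smallRoot a l w + x') = w ∧
      ‖smallRoot a l w‖ < ‖x'‖ := by
  have hw0 := ne_zero_of_two_mul_sqrt_lt_semiMajor hw
  have haC : (a : ℂ) ≠ 0 := by exact_mod_cast ha.ne'
  have hre := re_cpow_inv_two_pos (discr_mem_slitPlane (by positivity) hw)
  have hsq : ((1 - 4 * a * l / w ^ 2) ^ (2⁻¹ : ℂ)) ^ 2 = 1 - 4 * a * l / w ^ 2 :=
    cpow_nat_inv_pow _ two_ne_zero
  unfold smallRoot
  set σ : ℂ := (1 - 4 * a * l / w ^ 2) ^ (2⁻¹ : ℂ)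
  refine ⟨w * (1 + σ) / (2 * a), ?_, ?_, ?_⟩
  · field_simp at hsq ⊢
    linear_combination -hsq
  · field_simp
    ring
  · have hlt : ‖1 - σ‖ < ‖1 + σ‖ := by
      rw [← sq_lt_sq₀ (norm_nonneg _) (norm_nonneg _), Complex.sq_norm, Complex.sq_norm,
        normSq_apply, normSq_apply]
      simp only [sub_re, add_re, one_re, sub_im, add_im, one_im]
      nlinarith
    have := norm_pos_iff.2 hw0
    have : 0 < ‖(2 * a : ℂ)‖ := norm_pos_iff.2 (mul_ne_zero two_ne_zero haC)
    rw [norm_div, norm_div, norm_mul w, norm_mul w]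
    gcongr

lemma smallRoot_ne_zero (ha : 0 < a) (hl : 0 < l) (hw : 2 * √(a * l) < semiMajor a l w) :
    smallRoot a l w ≠ 0 := by
  obtain ⟨x', hprod, -, -⟩ := exists_conjugate_root ha hl hw
  intro h
  rw [h, zero_mul, mul_zero] at hprod
  exact hl.ne (by exact_mod_cast hprod)

lemma joukowski_smallRoot (ha : 0 < a) (hl : 0 < l) (hw : 2 * √(a * l) < semiMajor a l w) :
    joukowski (a : ℂ) l (smallRoot a l w) = w := by
  obtain ⟨x', hprod, hsum, -⟩ := exists_conjugate_root ha hl hw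
  have := smallRoot_ne_zero ha hl hw
  rw [joukowski, ← hprod]
  field_simp
  linear_combination hsum

lemma mul_norm_smallRoot_sq_lt (ha : 0 < a) (hl : 0 < l)
    (hw : 2 * √(a * l) < semiMajor a l w) : a * ‖smallRoot a l w‖ ^ 2 < l := by
  obtain ⟨x', hprod, -, hlt⟩ := exists_conjugate_root ha hl hw
  have hnorm := congrArg norm hprod
  rw [norm_mul, norm_mul, norm_real, norm_real, Real.norm_of_nonneg ha.le,
    Real.norm_of_nonneg hl.le] at hnorm
  have := norm_pos_iff.2 (smallRoot_ne_zero ha hl hw)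
  calc a * ‖smallRoot a l w‖ ^ 2 = a * (‖smallRoot a l w‖ * ‖smallRoot a l w‖) := by rw [sq]
    _ < a * (‖smallRoot a l w‖ * ‖x'‖) := by gcongr
    _ = l := hnorm

lemma eq_of_joukowski_eq (ha : 0 ≤ a) {x y : ℂ} (hx : x ≠ 0) (hxl : a * ‖x‖ ^ 2 < l) (hy : y ≠ 0)
    (hyl : a * ‖y‖ ^ 2 < l) (h : joukowski (a : ℂ) l x = joukowski (a : ℂ) l y) : x = y := by
  have hfac : (x - y) * (a * (x * y) - l) = 0 := by
    unfold joukowski at h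
    field_simp at h
    linear_combination h
  refine (mul_eq_zero.1 hfac).elim sub_eq_zero.1 fun hprod => ?_
  have hnorm := congrArg norm (sub_eq_zero.1 hprod)
  rw [norm_mul, norm_mul, norm_real, norm_real, Real.norm_of_nonneg ha, Real.norm_eq_abs] at hnorm
  nlinarith [sq_nonneg (‖x‖ - ‖y‖), le_abs_self l]

lemma two_mul_sqrt_lt_semiMajor_joukowski (ha : 0 ≤ a) (hx : x ≠ 0) (hxl : a * ‖x‖ ^ 2 < l) :
    2 * √(a * l) < semiMajor a l (joukowski (a : ℂ) l x) := by
  have hl : 0 ≤ l := (by positivity : 0 ≤ a * ‖x‖ ^ 2).trans hxl.le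
  rw [semiMajor_joukowski ha hl hx]
  exact two_mul_sqrt_lt_joukowski ha hl (norm_pos_iff.2 hx) hxl.ne

lemma smallRoot_joukowski (ha : 0 < a) (hx : x ≠ 0) (hxl : a * ‖x‖ ^ 2 < l) :
    smallRoot a l (joukowski (a : ℂ) l x) = x := by
  have hl : 0 < l := (by positivity : 0 ≤ a * ‖x‖ ^ 2).trans_lt hxl
  have hw := two_mul_sqrt_lt_semiMajor_joukowski ha.le hx hxl
  exact eq_of_joukowski_eq ha.le (smallRoot_ne_zero ha hl hw) (mul_norm_smallRoot_sq_lt ha hl hw)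
    hx hxl (joukowski_smallRoot ha hl hw)

lemma differentiableAt_smallRoot (h : 0 ≤ a * l) (hw : 2 * √(a * l) < semiMajor a l w) :
    DifferentiableAt ℂ (smallRoot a l) w := by
  have hw2 := pow_ne_zero 2 (ne_zero_of_two_mul_sqrt_lt_semiMajor hw)
  have hdiscr : DifferentiableAt ℂ (fun w : ℂ => 1 - 4 * a * l / w ^ 2) w := by
    fun_prop (disch := assumption)
  have := hdiscr.cpow (differentiableAt_const 2⁻¹) (discr_mem_slitPlane h hw)
  unfold smallRoot
  fun_prop

lemma semiMajor_eq_joukowski_norm_smallRoot (ha : 0 < a) (hl : 0 < l)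
    (hw : 2 * √(a * l) < semiMajor a l w) :
    semiMajor a l w = joukowski a l ‖smallRoot a l w‖ := by
  rw [← semiMajor_joukowski ha.le hl.le (smallRoot_ne_zero ha hl hw),
    joukowski_smallRoot ha hl hw]

lemma norm_smallRoot_lt_iff {R : ℝ} (ha : 0 < a) (hl : 0 < l) (hR : 0 < R) (hRl : a * R ^ 2 ≤ l)
    (hw : 2 * √(a * l) < semiMajor a l w) :
    ‖smallRoot a l w‖ < R ↔ joukowski a l R < semiMajor a l w := by
  rw [semiMajor_eq_joukowski_norm_smallRoot ha hl hw]
  exact ((strictAntiOn_joukowski ha).lt_iff_gt ⟨hR, hRl⟩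
    ⟨norm_pos_iff.2 (smallRoot_ne_zero ha hl hw), (mul_norm_smallRoot_sq_lt ha hl hw).le⟩).symm

lemma lt_norm_smallRoot_iff {R : ℝ} (ha : 0 < a) (hl : 0 < l) (hR : 0 < R) (hRl : a * R ^ 2 ≤ l)
    (hw : 2 * √(a * l) < semiMajor a l w) :
    R < ‖smallRoot a l w‖ ↔ semiMajor a l w < joukowski a l R := by
  rw [semiMajor_eq_joukowski_norm_smallRoot ha hl hw]
  exact ((strictAntiOn_joukowski ha).lt_iff_gt
    ⟨norm_pos_iff.2 (smallRoot_ne_zero ha hl hw), (mul_norm_smallRoot_sq_lt ha hl hw).le⟩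
    ⟨hR, hRl⟩).symm

lemma smallRoot_conj (ha : 0 < a) (hl : 0 < l) (hw : 2 * √(a * l) < semiMajor a l w) :
    smallRoot a l (conj w) = conj (smallRoot a l w) := by
  have h : joukowski (a : ℂ) l (conj (smallRoot a l w)) = conj w := by
    conv_rhs => rw [← joukowski_smallRoot ha hl hw]
    simp [joukowski]
  rw [← h, smallRoot_joukowski ha (by simpa using smallRoot_ne_zero ha hl hw)
    (by simpa using mul_norm_smallRoot_sq_lt ha hl hw)]

lemma tendsto_smallRoot_cocompact (ha : 0 < a) (hl : 0 < l) :
    Tendsto (smallRoot a l) (cocompact ℂ) (𝓝 0) := by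
  have hnorm := tendsto_norm_cocompact_atTop (E := ℂ)
  refine squeeze_zero_norm' ?_ ((tendsto_const_nhds (x := 2 * l)).div_atTop hnorm)
  filter_upwards [hnorm.eventually_gt_atTop (2 * √(a * l))] with w hw
  have hw' := hw.trans_le (norm_le_semiMajor a l w)
  have hx := norm_pos_iff.2 (smallRoot_ne_zero ha hl hw')
  have hle : ‖w‖ ≤ a * ‖smallRoot a l w‖ + l / ‖smallRoot a l w‖ :=
    (norm_le_semiMajor a l w).trans_eq (semiMajor_eq_joukowski_norm_smallRoot ha hl hw')
  rw [le_div_iff₀ ((by positivity : 0 ≤ 2 * √(a * l)).trans_lt hw)]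
  calc ‖smallRoot a l w‖ * ‖w‖
      ≤ ‖smallRoot a l w‖ * (a * ‖smallRoot a l w‖ + l / ‖smallRoot a l w‖) := by gcongr
    _ = a * ‖smallRoot a l w‖ ^ 2 + l := by field_simp
    _ ≤ 2 * l := by linarith [mul_norm_smallRoot_sq_lt ha hl hw']

end Joukowski

/-! ### Cauchy-type integrals -/

section CauchyType

lemma exists_pos_forall_le_norm_sub {K : Set ℂ} {w : ℂ} (hK : IsClosed K) (hw : w ∉ K) :
    ∃ ε > 0, ∀ v ∈ ball w ε, ∀ z ∈ K, ε ≤ ‖z - v‖ := by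
  obtain ⟨ε, hε, hball⟩ := Metric.isOpen_iff.1 hK.isOpen_compl w hw
  refine ⟨ε / 2, half_pos hε, fun v hv z hz => ?_⟩
  have hzw : ε ≤ ‖z - w‖ := by
    by_contra! hlt
    exact hball (mem_ball_iff_norm.2 hlt) hz
  have htri := norm_sub_le_norm_sub_add_norm_sub z v w
  have := mem_ball_iff_norm.1 hv
  linarith

lemma differentiableAt_integral_div_sub {g h : ℝ → ℂ} {s t : ℝ} {w : ℂ}
    (hg : ContinuousOn g (uIcc s t)) (hh : ContinuousOn h (uIcc s t)) (hw : w ∉ h '' uIcc s t) :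
    DifferentiableAt ℂ (fun w => ∫ θ in s..t, g θ / (h θ - w)) w := by
  obtain ⟨ε, hε, hdist⟩ :=
    exists_pos_forall_le_norm_sub (isCompact_uIcc.image_of_continuousOn hh).isClosed hw
  replace hdist : ∀ θ ∈ uIcc s t, ∀ v ∈ ball w ε, ε ≤ ‖h θ - v‖ :=
    fun θ hθ v hv => hdist v hv _ (mem_image_of_mem h hθ)
  have hne : ∀ θ ∈ uIcc s t, ∀ v ∈ ball w ε, h θ - v ≠ 0 :=
    fun θ hθ v hv => norm_pos_iff.1 (hε.trans_le (hdist θ hθ v hv))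
  have hwb := mem_ball_self (x := w) hε
  have hcont : ∀ v ∈ ball w ε, ContinuousOn (fun θ => g θ / (h θ - v)) (uIcc s t) :=
    fun v hv => hg.div (hh.sub continuousOn_const) fun θ hθ => hne θ hθ v hv
  have hcont' : ContinuousOn (fun θ => g θ / (h θ - w) ^ 2) (uIcc s t) :=
    hg.div ((hh.sub continuousOn_const).pow 2) fun θ hθ => pow_ne_zero 2 (hne θ hθ w hwb)
  refine (intervalIntegral.hasDerivAt_integral_of_dominated_loc_of_deriv_le
    (F := fun v θ => g θ / (h θ - v)) (F' := fun v θ => g θ / (h θ - v) ^ 2)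
    (bound := fun θ => ‖g θ‖ / ε ^ 2) (ball_mem_nhds w hε)
    ?_ (hcont w hwb).intervalIntegrable ?_ ?_ ?_ ?_).2.differentiableAt
  · filter_upwards [ball_mem_nhds w hε] with v hv
    exact ((hcont v hv).mono uIoc_subset_uIcc).aestronglyMeasurable measurableSet_uIoc
  · exact (hcont'.mono uIoc_subset_uIcc).aestronglyMeasurable measurableSet_uIoc
  · refine Eventually.of_forall fun θ hθ v hv => ?_
    rw [norm_div, norm_pow]
    gcongr
    exact hdist θ (uIoc_subset_uIcc hθ) v hv
  · exact (hg.norm.div_const _).intervalIntegrable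
  · refine Eventually.of_forall fun θ hθ v hv => ?_
    have hv0 := hne θ (uIoc_subset_uIcc hθ) v hv
    exact ((hasDerivAt_const v (g θ)).div ((hasDerivAt_id v).const_sub (h θ)) hv0).congr_deriv
      (by simp)

lemma tendsto_integral_div_sub_cocompact {g h : ℝ → ℂ} {s t : ℝ}
    (hg : ContinuousOn g (uIcc s t)) (hh : ContinuousOn h (uIcc s t)) :
    Tendsto (fun w => ∫ θ in s..t, g θ / (h θ - w)) (cocompact ℂ) (𝓝 0) := by
  obtain ⟨M, hM⟩ := isCompact_uIcc.exists_bound_of_continuousOn hg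
  obtain ⟨M', hM'⟩ := isCompact_uIcc.exists_bound_of_continuousOn hh
  have hnorm : Tendsto (fun w : ℂ => ‖w‖ - M') (cocompact ℂ) atTop :=
    tendsto_atTop_add_const_right _ _ tendsto_norm_cocompact_atTop
  have hlim : Tendsto (fun w : ℂ => M / (‖w‖ - M') * |t - s|) (cocompact ℂ) (𝓝 0) := by
    simpa using (hnorm.const_div_atTop M).mul_const |t - s|
  refine squeeze_zero_norm' ?_ hlim
  filter_upwards [hnorm.eventually_gt_atTop 0] with w hw
  refine intervalIntegral.norm_integral_le_of_norm_le_const fun θ hθ => ?_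
  have hgM := hM θ (uIoc_subset_uIcc hθ)
  have hhM := hM' θ (uIoc_subset_uIcc hθ)
  rw [norm_div]
  refine div_le_div₀ ((norm_nonneg _).trans hgM) hgM hw ?_
  rw [norm_sub_rev]
  exact (sub_le_sub_left hhM _).trans (norm_sub_norm_le _ _)

variable {c w : ℂ} {R : ℝ} {g h : ℂ → ℂ}

lemma continuous_comp_circleMap (hR : 0 ≤ R) (hg : ContinuousOn g (sphere c R)) :
    Continuous fun θ => g (circleMap c R θ) :=
  hg.comp_continuous (continuous_circleMap c R) (circleMap_mem_sphere c hR)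

lemma continuous_deriv_circleMap_mul (hR : 0 ≤ R) (hg : ContinuousOn g (sphere c R)) :
    Continuous fun θ => deriv (circleMap c R) θ * g (circleMap c R θ) := by
  simp only [deriv_circleMap]
  exact ((continuous_circleMap 0 R).mul continuous_const).mul (continuous_comp_circleMap hR hg)

lemma circleIntegral_div_sub_eq (g h : ℂ → ℂ) (c : ℂ) (R : ℝ) :
    (fun w => ∮ ζ in C(c, R), g ζ / (h ζ - w)) = fun w => ∫ θ in (0 : ℝ)..2 * Real.pi,
      deriv (circleMap c R) θ * g (circleMap c R θ) / (h (circleMap c R θ) - w) := by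
  simp only [circleIntegral, smul_eq_mul, mul_div_assoc]

lemma differentiableAt_circleIntegral_div_sub (hR : 0 ≤ R) (hg : ContinuousOn g (sphere c R))
    (hh : ContinuousOn h (sphere c R)) (hw : w ∉ h '' sphere c R) :
    DifferentiableAt ℂ (fun w => ∮ ζ in C(c, R), g ζ / (h ζ - w)) w := by
  rw [circleIntegral_div_sub_eq]
  refine differentiableAt_integral_div_sub (continuous_deriv_circleMap_mul hR hg).continuousOn
    (continuous_comp_circleMap hR hh).continuousOn ?_
  rintro ⟨θ, -, hθ⟩
  exact hw ⟨_, circleMap_mem_sphere c hR θ, hθ⟩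

lemma tendsto_circleIntegral_div_sub_cocompact (hR : 0 ≤ R) (hg : ContinuousOn g (sphere c R))
    (hh : ContinuousOn h (sphere c R)) :
    Tendsto (fun w => ∮ ζ in C(c, R), g ζ / (h ζ - w)) (cocompact ℂ) (𝓝 0) := by
  rw [circleIntegral_div_sub_eq]
  exact tendsto_integral_div_sub_cocompact (continuous_deriv_circleMap_mul hR hg).continuousOn
    (continuous_comp_circleMap hR hh).continuousOn

lemma circleIntegral_sub_inv_of_notMem_closedBall (hR : 0 ≤ R) (hw : w ∉ closedBall c R) :
    (∮ ζ in C(c, R), (ζ - w)⁻¹) = 0 := by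
  have hne : ∀ ζ ∈ closedBall c R, ζ - w ≠ 0 := by
    rintro ζ hζ h0
    exact hw (sub_eq_zero.1 h0 ▸ hζ)
  refine circleIntegral_eq_zero_of_differentiable_on_off_countable hR countable_empty
    ((continuousOn_id.sub continuousOn_const).inv₀ hne) fun ζ hζ => ?_
  have := hne ζ (ball_subset_closedBall hζ.1)
  fun_prop (disch := assumption)

variable {r : ℝ} {f : ℂ → ℂ} {y : ℂ}

lemma circleIntegral_dslope {ρ : ℝ} (hρ : 0 ≤ ρ) (hf : ContinuousOn f (sphere c ρ))
    (hy : y ∉ sphere c ρ) :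
    (∮ ζ in C(c, ρ), dslope f y ζ)
      = (∮ ζ in C(c, ρ), f ζ / (ζ - y)) - f y * ∮ ζ in C(c, ρ), (ζ - y)⁻¹ := by
  have hne : ∀ ζ ∈ sphere c ρ, ζ ≠ y := fun ζ hζ h => hy (h ▸ hζ)
  have hsub : ContinuousOn (fun ζ => ζ - y) (sphere c ρ) := continuousOn_id.sub continuousOn_const
  have hsub0 : ∀ ζ ∈ sphere c ρ, ζ - y ≠ 0 := fun ζ hζ => sub_ne_zero.2 (hne ζ hζ)
  rw [← circleIntegral.integral_const_mul, ← circleIntegral.integral_sub]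
  · refine circleIntegral.integral_congr hρ fun ζ hζ => ?_
    simp only [dslope_of_ne f (hne ζ hζ), slope_def_field]
    ring
  · exact (hf.div hsub hsub0).circleIntegrable hρ
  · exact (continuousOn_const.mul (hsub.inv₀ hsub0)).circleIntegrable hρ

lemma circleIntegral_eq_of_differentiable_on_closed_annulus (hR : 0 < R) (hle : R ≤ r)
    (hf : ∀ ζ ∈ closedBall c r \ ball c R, DifferentiableAt ℂ f ζ) :
    (∮ ζ in C(c, r), f ζ) = ∮ ζ in C(c, R), f ζ :=
  circleIntegral_eq_of_differentiable_on_annulus_off_countable hR hle countable_empty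
    (fun ζ hζ => (hf ζ hζ).continuousAt.continuousWithinAt)
    fun ζ hζ => hf ζ ⟨ball_subset_closedBall hζ.1.1, fun h => hζ.1.2 (ball_subset_closedBall h)⟩

lemma sphere_subset_closedBall_diff_ball {ρ : ℝ} (hRρ : R ≤ ρ) (hρr : ρ ≤ r) :
    sphere c ρ ⊆ closedBall c r \ ball c R := by
  intro ζ hζ
  rw [mem_sphere] at hζ
  simp [hζ, hRρ, hρr]

lemma circleIntegral_div_sub_annulus (hR : 0 < R)
    (hf : ∀ ζ ∈ closedBall c r \ ball c R, DifferentiableAt ℂ f ζ)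
    (hyr : y ∈ ball c r) (hyR : y ∉ closedBall c R) :
    (∮ ζ in C(c, r), f ζ / (ζ - y)) - (∮ ζ in C(c, R), f ζ / (ζ - y))
      = 2 * Real.pi * I * f y := by
  have hRr : R < r := (not_le.1 hyR).trans hyr
  have hfc : ContinuousOn f (closedBall c r \ ball c R) :=
    fun ζ hζ => (hf ζ hζ).continuousAt.continuousWithinAt
  have hmem : closedBall c r \ ball c R ∈ 𝓝 y := by
    filter_upwards [isOpen_ball.mem_nhds hyr, isClosed_closedBall.isOpen_compl.mem_nhds hyR]
      with ζ h₁ h₂ using ⟨ball_subset_closedBall h₁, fun h => h₂ (ball_subset_closedBall h)⟩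
  have hslope := circleIntegral_eq_of_differentiable_on_annulus_off_countable hR hRr.le
    (countable_singleton y) ((continuousOn_dslope hmem).2 ⟨hfc, hf y (mem_of_mem_nhds hmem)⟩)
    fun ζ hζ => (differentiableAt_dslope_of_ne hζ.2).2
      (hf ζ ⟨ball_subset_closedBall hζ.1.1, fun h => hζ.1.2 (ball_subset_closedBall h)⟩)
  rw [circleIntegral_dslope (hR.trans hRr).le
      (hfc.mono (sphere_subset_closedBall_diff_ball hRr.le le_rfl))
      (fun h => sphere_disjoint_ball.le_bot ⟨h, hyr⟩),
    circleIntegral_dslope hR.le (hfc.mono (sphere_subset_closedBall_diff_ball le_rfl hRr.le))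
      (fun h => hyR (sphere_subset_closedBall h)),
    circleIntegral.integral_sub_inv_of_mem_ball hyr,
    circleIntegral_sub_inv_of_notMem_closedBall hR.le hyR] at hslope
  linear_combination hslope

end CauchyType

section EllipseIntegral

variable {b m r R : ℝ} {f : ℂ → ℂ} {w y : ℂ}

/-- The Cauchy-type integral of `f`, transported by `joukowski b m` from the circle of radius `R`
to its image ellipse and parametrised by the circle. -/
noncomputable def ellipseInt (b m R : ℝ) (f : ℂ → ℂ) (w : ℂ) : ℂ :=
  (2 * Real.pi * I)⁻¹ * ∮ ζ in C(0, R), f ζ * (b - m / ζ ^ 2) / (joukowski (b : ℂ) m ζ - w)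

lemma continuousOn_ellipseInt_numerator (hR : 0 < R) (hf : ContinuousOn f (sphere 0 R)) :
    ContinuousOn (fun ζ => f ζ * (b - m / ζ ^ 2)) (sphere 0 R) :=
  hf.mul (continuousOn_const.sub (continuousOn_const.div (continuousOn_id.pow 2)
    fun _ hζ => pow_ne_zero 2 (ne_of_mem_sphere hζ hR.ne')))

lemma continuousOn_joukowski_sphere (hR : 0 < R) :
    ContinuousOn (joukowski (b : ℂ) m) (sphere 0 R) := fun _ hζ =>
  (differentiableAt_joukowski _ _ (ne_of_mem_sphere hζ hR.ne')).continuousAt.continuousWithinAt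

lemma differentiableAt_ellipseInt (hb : 0 ≤ b) (hm : 0 ≤ m) (hR : 0 < R)
    (hf : ContinuousOn f (sphere 0 R)) (hw : semiMajor b m w ≠ joukowski b m R) :
    DifferentiableAt ℂ (ellipseInt b m R f) w := by
  refine (differentiableAt_circleIntegral_div_sub hR.le (continuousOn_ellipseInt_numerator hR hf)
    (continuousOn_joukowski_sphere hR) ?_).const_mul _
  rintro ⟨ζ, hζ, rfl⟩
  rw [semiMajor_joukowski hb hm (ne_of_mem_sphere hζ hR.ne'), mem_sphere_zero_iff_norm.1 hζ] at hw
  exact hw rfl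

lemma tendsto_ellipseInt_cocompact (hR : 0 < R) (hf : ContinuousOn f (sphere 0 R)) :
    Tendsto (ellipseInt b m R f) (cocompact ℂ) (𝓝 0) := by
  have h := (tendsto_circleIntegral_div_sub_cocompact hR.le (continuousOn_ellipseInt_numerator
    (b := b) (m := m) hR hf) (continuousOn_joukowski_sphere (b := b) (m := m) hR)).const_mul
    (2 * Real.pi * I)⁻¹
  rwa [mul_zero] at h

lemma joukowski_kernel_eq {K : Type*} [Field K] {b m ζ y : K} (hζ : ζ ≠ 0) (hy : y ≠ 0)
    (hζy : ζ ≠ y) (hconj : b * y * ζ - m ≠ 0) :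
    (b - m / ζ ^ 2) / (joukowski b m ζ - joukowski b m y)
      = (ζ - y)⁻¹ + (b * y / (b * y * ζ - m) - ζ⁻¹) := by
  have hsub := sub_ne_zero.2 hζy
  have hfactor : joukowski b m ζ - joukowski b m y = (ζ - y) * (b * y * ζ - m) / (ζ * y) := by
    unfold joukowski
    field_simp
    ring
  obtain ⟨d, hd⟩ : ∃ d, d = b * y * ζ - m := ⟨_, rfl⟩
  have hm : m = b * y * ζ - d := by rw [hd]; ring
  rw [hfactor, ← hd, hm]
  rw [← hd] at hconj
  field_simp
  ring

lemma mul_mul_sub_ne_zero {ζ : ℂ} (hb : 0 < b) (hr : b * r ^ 2 = m) (hy : ‖y‖ < r)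
    (hζ : ‖ζ‖ ≤ r) : (b : ℂ) * y * ζ - m ≠ 0 := by
  intro h0
  have hnorm := congrArg norm (sub_eq_zero.1 h0)
  have hr0 : 0 < r := (norm_nonneg y).trans_lt hy
  rw [norm_mul, norm_mul, norm_real, norm_real, ← hr, Real.norm_of_nonneg hb.le,
    Real.norm_of_nonneg (by positivity), mul_assoc] at hnorm
  have := mul_left_cancel₀ hb.ne' hnorm
  nlinarith [norm_nonneg ζ, norm_nonneg y]

lemma circleIntegral_mul_joukowski_kernel {ρ : ℝ} (hb : 0 < b) (hr : b * r ^ 2 = m) (hρ : 0 < ρ)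
    (hρr : ρ ≤ r) (hf : ContinuousOn f (sphere 0 ρ)) (hy0 : y ≠ 0) (hyr : ‖y‖ < r)
    (hρy : ρ ≠ ‖y‖) :
    (∮ ζ in C(0, ρ), f ζ * (b - m / ζ ^ 2) / (joukowski (b : ℂ) m ζ - joukowski (b : ℂ) m y))
      = (∮ ζ in C(0, ρ), f ζ / (ζ - y))
        + ∮ ζ in C(0, ρ), f ζ * (b * y / (b * y * ζ - m) - ζ⁻¹) := by
  have hζ0 {ζ : ℂ} (hζ : ζ ∈ sphere 0 ρ) : ζ ≠ 0 := ne_of_mem_sphere hζ hρ.ne'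
  have hζy {ζ : ℂ} (hζ : ζ ∈ sphere 0 ρ) : ζ ≠ y := by
    rintro rfl
    exact hρy (mem_sphere_zero_iff_norm.1 hζ).symm
  have hζm {ζ : ℂ} (hζ : ζ ∈ sphere 0 ρ) : b * y * ζ - m ≠ 0 :=
    mul_mul_sub_ne_zero hb hr hyr ((mem_sphere_zero_iff_norm.1 hζ).trans_le hρr)
  rw [← circleIntegral.integral_add]
  · refine circleIntegral.integral_congr hρ.le fun ζ hζ => ?_
    rw [mul_div_assoc, joukowski_kernel_eq (hζ0 hζ) hy0 (hζy hζ) (hζm hζ)]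
    ring
  · exact (hf.div (by fun_prop) fun ζ hζ => sub_ne_zero.2 (hζy hζ)).circleIntegrable hρ.le
  · exact (hf.mul ((continuousOn_const.div (by fun_prop) fun ζ => hζm).sub
      (continuousOn_id.inv₀ fun ζ => hζ0))).circleIntegrable hρ.le

-- The kernel of `ellipseInt` differs from the Cauchy kernel by a term which is holomorphic on
-- the annulus: the second preimage `m / (b * y)` of `joukowski b m y` has norm larger than `r`.
lemma ellipseInt_sub_ellipseInt (hb : 0 < b) (hR : 0 < R) (hr : b * r ^ 2 = m)
    (hf : ∀ ζ : ℂ, R ≤ ‖ζ‖ → ‖ζ‖ ≤ r → DifferentiableAt ℂ f ζ) (hRy : R < ‖y‖) (hyr : ‖y‖ < r) :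
    ellipseInt b m r f (joukowski (b : ℂ) m y) - ellipseInt b m R f (joukowski (b : ℂ) m y)
      = f y := by
  have hRr := hRy.trans hyr
  have hy0 : y ≠ 0 := norm_pos_iff.1 (hR.trans hRy)
  have hfd : ∀ ζ ∈ closedBall (0 : ℂ) r \ ball 0 R, DifferentiableAt ℂ f ζ :=
    fun ζ hζ => hf ζ (by simpa using hζ.2) (by simpa using hζ.1)
  have hcorrd : ∀ ζ ∈ closedBall (0 : ℂ) r \ ball 0 R,
      DifferentiableAt ℂ (fun ζ => f ζ * (b * y / (b * y * ζ - m) - ζ⁻¹)) ζ := by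
    intro ζ hζ
    have hζ0 : ζ ≠ 0 := norm_pos_iff.1 (hR.trans_le (by simpa using hζ.2))
    have hconj := mul_mul_sub_ne_zero hb hr hyr (by simpa using hζ.1 : ‖ζ‖ ≤ r)
    have := hfd ζ hζ
    fun_prop (disch := assumption)
  have hfc {ρ : ℝ} (hRρ : R ≤ ρ) (hρr : ρ ≤ r) : ContinuousOn f (sphere 0 ρ) := fun ζ hζ =>
    (hfd ζ (sphere_subset_closedBall_diff_ball hRρ hρr hζ)).continuousAt.continuousWithinAt
  have hcauchy := circleIntegral_div_sub_annulus hR hfd (mem_ball_zero_iff.2 hyr)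
    (by simpa using hRy)
  unfold ellipseInt
  rw [← mul_sub,
    circleIntegral_mul_joukowski_kernel hb hr (hR.trans hRr) le_rfl (hfc hRr.le le_rfl) hy0 hyr
      hyr.ne',
    circleIntegral_mul_joukowski_kernel hb hr hR hRr.le (hfc le_rfl hRr.le) hy0 hyr hRy.ne,
    circleIntegral_eq_of_differentiable_on_closed_annulus hR hRr.le hcorrd,
    add_sub_add_right_eq_sub, hcauchy, inv_mul_cancel_left₀ two_pi_I_ne_zero]

end EllipseIntegral

/-! ### A Riemann–Hilbert problem on two touching ellipses -/

section Liouville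

variable {F f g : ℂ → ℂ} {U V : Set ℂ} {w₀ c : ℂ}

lemma eq_of_tendsto_cocompact_of_isBigO_one (hd : DifferentiableOn ℂ F {w₀}ᶜ)
    (hbdd : F =O[𝓝[≠] w₀] fun _ => (1 : ℝ)) (hlim : Tendsto F (cocompact ℂ) (𝓝 c))
    {w : ℂ} (hw : w ≠ w₀) : F w = c := by
  have hbdd' : IsBoundedUnder (· ≤ ·) (𝓝[≠] w₀) fun w => ‖F w - F w₀‖ :=
    (Asymptotics.isBigO_one_iff ℝ).1 (hbdd.sub (Asymptotics.isBigO_const_const _ one_ne_zero _))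
  have hext := differentiableOn_update_limUnder_of_isLittleO univ_mem
    (hd.mono fun w hw => hw.2) hbdd'.isLittleO_sub_self_inv
  have hlim' : Tendsto (Function.update F w₀ (limUnder (𝓝[≠] w₀) F)) (cocompact ℂ) (𝓝 c) := by
    refine hlim.congr' ?_
    filter_upwards [isCompact_singleton.compl_mem_cocompact] with w hw
    exact (Function.update_of_ne hw _ _).symm
  rw [← (differentiableOn_univ.1 hext).apply_eq_of_tendsto_cocompact w hlim',
    Function.update_of_ne hw]

lemma eq_of_tendsto_cocompact_of_eqOn_inter (hU : IsOpen U) (hV : IsOpen V)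
    (hcover : ∀ w, w ≠ w₀ → w ∈ U ∪ V) (hf : DifferentiableOn ℂ f U)
    (hg : DifferentiableOn ℂ g V) (hfg : EqOn f g (U ∩ V))
    (hf₀ : f =O[𝓝[U] w₀] fun _ => (1 : ℝ)) (hg₀ : g =O[𝓝[V] w₀] fun _ => (1 : ℝ))
    (hU' : U ∈ cocompact ℂ) (hlim : Tendsto f (cocompact ℂ) (𝓝 c)) {w : ℂ} (hwU : w ∈ U)
    (hw : w ≠ w₀) : f w = c := by
  classical
  have hFf : EqOn (U.piecewise f g) f U := U.piecewise_eqOn f g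
  have hFg : EqOn (U.piecewise f g) g V := by
    intro w hwV
    by_cases hwU : w ∈ U
    · exact (hFf hwU).trans (hfg ⟨hwU, hwV⟩)
    · exact U.piecewise_eq_of_notMem f g hwU
  have hFd : DifferentiableOn ℂ (U.piecewise f g) {w₀}ᶜ := by
    have h := (hf.congr hFf).union_of_isOpen (hg.congr hFg) hU hV
    exact h.mono hcover
  have hF₀ : U.piecewise f g =O[𝓝[≠] w₀] fun _ => (1 : ℝ) := by
    have hf' := hf₀.congr' (hFf.symm.eventuallyEq_of_mem self_mem_nhdsWithin) .rfl
    have hg' := hg₀.congr' (hFg.symm.eventuallyEq_of_mem self_mem_nhdsWithin) .rfl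
    refine (hf'.sup hg').mono ?_
    rw [← nhdsWithin_union]
    exact nhdsWithin_mono _ hcover
  rw [← hFf hwU]
  exact eq_of_tendsto_cocompact_of_isBigO_one hFd hF₀
    (hlim.congr' (hFf.symm.eventuallyEq_of_mem hU')) hw

end Liouville

section RiemannHilbert

variable {a l b m R : ℝ} {w : ℂ} {Φ Ψ A B : ℂ → ℂ}

lemma two_mul_sqrt_lt_add (ha : 0 < a) (hal : a < l) : 2 * √(a * l) < a + l := by
  simpa [joukowski_one] using
    two_mul_sqrt_lt_joukowski (x := 1) ha.le (ha.trans hal).le one_pos (by simpa using hal.ne)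

lemma norm_smallRoot_lt_one (ha : 0 < a) (hal : a < l) (hw : a + l < semiMajor a l w) :
    ‖smallRoot a l w‖ < 1 :=
  (norm_smallRoot_lt_iff ha (ha.trans hal) one_pos (by simpa using hal.le)
    ((two_mul_sqrt_lt_add ha hal).trans hw)).2 (by rwa [joukowski_one])

lemma add_lt_joukowski (hb : 0 < b) (hbm : b < m) (hR : 0 < R) (hR1 : R < 1) :
    b + m < joukowski b m R := by
  rw [← joukowski_one]
  exact strictAntiOn_joukowski hb ⟨hR, (mul_sq_lt_of_le_one hb hbm hR.le hR1.le).le⟩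
    ⟨one_pos, by simpa using hbm.le⟩ hR1

lemma semiMajor_add (hb : 0 ≤ b) (hm : 0 ≤ m) : semiMajor b m (b + m) = b + m := by
  simpa [joukowski_one] using semiMajor_joukowski hb hm (one_ne_zero (α := ℂ))

-- Both ellipses are contained in the discs centred at their centres whose radii are the
-- semi-major axes, and these discs touch at `b + m`.
lemma add_lt_semiMajor_sub (hw : semiMajor b m w ≤ b + m) (hw₀ : w ≠ b + m) :
    a + l < semiMajor a l (a + l + b + m - w) := by
  by_contra! hle
  have hnorm := (norm_le_semiMajor b m w).trans hw
  have hre : a + l + b + m - w.re ≤ a + l := by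
    simpa using (re_le_norm _).trans ((norm_le_semiMajor a l _).trans hle)
  have hw_re : w.re = ‖w‖ := le_antisymm (re_le_norm w) (by linarith)
  apply hw₀
  rw [eq_coe_norm_of_nonneg (re_eq_norm.1 hw_re), ← hw_re]
  norm_cast
  linarith [re_le_norm w]

lemma mul_cexp_neg_eq_of_eq_cexp_sub_mul {s t α β : ℂ} (h : s = exp (α - β) * t) :
    s * exp (-α) = t * exp (-β) := by
  have hexp : exp (α - β) * exp (-α) = exp (-β) := by
    rw [← exp_add, sub_add_eq_add_sub, add_neg_cancel, zero_sub]
  rw [h, mul_right_comm, hexp, mul_comm]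

lemma isBigO_one_mul_cexp_neg {U : Set ℂ} {w₀ : ℂ} {F A : ℂ → ℂ} {C : ℝ}
    (hF : ∀ w ∈ U, ‖F w‖ ≤ C) (hA : ContinuousAt A w₀) :
    (fun w => F w * exp (-A w)) =O[𝓝[U] w₀] fun _ => (1 : ℝ) := by
  have hF' : F =O[𝓝[U] w₀] fun _ => (1 : ℝ) := by
    refine Asymptotics.IsBigO.of_bound C ?_
    filter_upwards [self_mem_nhdsWithin] with w hw
    simpa using hF w hw
  have hA' : (fun w => exp (-A w)) =O[𝓝[U] w₀] fun _ => (1 : ℝ) :=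
    (hA.neg.cexp.tendsto.mono_left nhdsWithin_le_nhds).isBigO_one ℝ
  simpa using hF'.mul hA'

lemma differentiableOn_comp_smallRoot (ha : 0 < a) (hal : a < l)
    (hΨ : DifferentiableOn ℂ Ψ (ball 0 1)) :
    DifferentiableOn ℂ (fun w => Ψ (smallRoot a l w)) {w | a + l < semiMajor a l w} := by
  refine hΨ.comp (fun w hw => (differentiableAt_smallRoot (by nlinarith)
    ((two_mul_sqrt_lt_add ha hal).trans hw)).differentiableWithinAt) fun w hw => ?_
  exact mem_ball_zero_iff.2 (norm_smallRoot_lt_one ha hal hw)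

lemma tendsto_comp_smallRoot_mul_cexp_neg (hb : 0 < b) (hm : 0 < m) (hΦ : ContinuousAt Φ 0)
    (hA : Tendsto A (cocompact ℂ) (𝓝 0)) :
    Tendsto (fun w => Φ (smallRoot b m w) * exp (-A w)) (cocompact ℂ) (𝓝 (Φ 0)) := by
  simpa using (hΦ.tendsto.comp (tendsto_smallRoot_cocompact hb hm)).mul
    ((continuous_exp.tendsto _).comp hA.neg)

lemma isOpen_setOf_lt_semiMajor (b m t : ℝ) : IsOpen {w | t < semiMajor b m w} :=
  isOpen_lt continuous_const (continuous_semiMajor b m)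

lemma setOf_lt_semiMajor_mem_cocompact (b m t : ℝ) :
    {w | t < semiMajor b m w} ∈ cocompact ℂ := by
  filter_upwards [(tendsto_norm_cocompact_atTop (E := ℂ)).eventually_gt_atTop t] with w hw
  exact hw.trans_le (norm_le_semiMajor b m w)

-- `Φ ∘ smallRoot * exp (-A)` and `Ψ ∘ smallRoot * exp (-B)` are two pieces of one function,
-- holomorphic off the contact point `b + m` of the ellipses and bounded near it.
lemma comp_smallRoot_eq_mul_cexp (ha : 0 < a) (hal : a < l) (hb : 0 < b) (hbm : b < m)
    (hR : 0 < R) (hR1 : R < 1) (hΦ : DifferentiableOn ℂ Φ (ball 0 1))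
    (hΨ : DifferentiableOn ℂ Ψ (ball 0 1)) {C : ℝ} (hΦC : ∀ y ∈ ball 0 1, ‖Φ y‖ ≤ C)
    (hΨC : ∀ x ∈ ball 0 1, ‖Ψ x‖ ≤ C)
    (hA : DifferentiableOn ℂ A {w | 2 * √(b * m) < semiMajor b m w})
    (hB : DifferentiableOn ℂ B {w | semiMajor b m w < joukowski b m R})
    (hA0 : Tendsto A (cocompact ℂ) (𝓝 0))
    (hjump : ∀ w, b + m < semiMajor b m w → semiMajor b m w < joukowski b m R →
      a + l < semiMajor a l (a + l + b + m - w) →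
      Φ (smallRoot b m w) = exp (A w - B w) * Ψ (smallRoot a l (a + l + b + m - w)))
    (hw : b + m < semiMajor b m w) : Φ (smallRoot b m w) = Φ 0 * exp (A w) := by
  have hm := hb.trans hbm
  have hbR := add_lt_joukowski hb hbm hR hR1
  have hfoci := two_mul_sqrt_lt_add hb hbm
  have hw₀ := semiMajor_add hb.le hm.le
  let U : Set ℂ := {w | b + m < semiMajor b m w}
  let V : Set ℂ := {w | a + l < semiMajor a l (a + l + b + m - w)} ∩
    {w | semiMajor b m w < joukowski b m R}
  have hsub : Continuous fun w : ℂ => a + l + b + m - w := by fun_prop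
  have hVo : IsOpen V := ((isOpen_setOf_lt_semiMajor a l _).preimage hsub).inter
    (isOpen_lt (continuous_semiMajor b m) continuous_const)
  have hcover : ∀ w, w ≠ (b : ℂ) + m → w ∈ U ∪ V := fun w hne => by
    rcases lt_or_ge (b + m) (semiMajor b m w) with h | h
    · exact .inl h
    · exact .inr ⟨add_lt_semiMajor_sub h hne, h.trans_lt hbR⟩
  have hfd : DifferentiableOn ℂ (fun w => Φ (smallRoot b m w) * exp (-A w)) U :=
    (differentiableOn_comp_smallRoot hb hbm hΦ).mul
      ((hA.mono fun w hw => hfoci.trans hw).neg.cexp)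
  have hgd : DifferentiableOn ℂ
      (fun w => Ψ (smallRoot a l (a + l + b + m - w)) * exp (-B w)) V :=
    ((differentiableOn_comp_smallRoot ha hal hΨ).comp (by fun_prop) fun w hw => hw.1).mul
      ((hB.mono inter_subset_right).neg.cexp)
  have hfg : EqOn (fun w => Φ (smallRoot b m w) * exp (-A w))
      (fun w => Ψ (smallRoot a l (a + l + b + m - w)) * exp (-B w)) (U ∩ V) :=
    fun w hw => mul_cexp_neg_eq_of_eq_cexp_sub_mul (hjump w hw.1 hw.2.2 hw.2.1)
  have hA₀ : ContinuousAt A (b + m) := (hA.differentiableAt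
    ((isOpen_setOf_lt_semiMajor b m _).mem_nhds (by simpa [hw₀] using hfoci))).continuousAt
  have hB₀ : ContinuousAt B (b + m) := (hB.differentiableAt ((isOpen_lt
    (continuous_semiMajor b m) continuous_const).mem_nhds (by simpa [hw₀] using hbR))).continuousAt
  have hconst := eq_of_tendsto_cocompact_of_eqOn_inter (isOpen_setOf_lt_semiMajor b m _) hVo
    hcover hfd hgd hfg
    (isBigO_one_mul_cexp_neg
      (fun w hw => hΦC _ (mem_ball_zero_iff.2 (norm_smallRoot_lt_one hb hbm hw))) hA₀)
    (isBigO_one_mul_cexp_neg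
      (fun w hw => hΨC _ (mem_ball_zero_iff.2 (norm_smallRoot_lt_one ha hal hw.1))) hB₀)
    (setOf_lt_semiMajor_mem_cocompact b m _)
    (tendsto_comp_smallRoot_mul_cexp_neg hb hm (hΦ.continuousOn.continuousAt
      (ball_mem_nhds 0 one_pos)) hA0) hw (by rintro rfl; exact hw.ne' hw₀)
  rw [← hconst, mul_assoc, ← exp_add, neg_add_cancel, exp_zero, mul_one]

end RiemannHilbert

section Coupling

variable {a l b m p1 p2 r R : ℝ} {x y z u v w : ℂ} {Φ Ψ : ℂ → ℂ}

lemma re_sub_mul_pos (ha : 0 < a) (hal : a < l) (hx : a * ‖x‖ ^ 2 ≤ l) :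
    0 < ((l : ℂ) - a * x).re := by
  have hnorm : a * ‖x‖ < l := by
    by_contra! h
    have : 1 < ‖x‖ := by
      by_contra! h'
      nlinarith [norm_nonneg x]
    nlinarith
  have hre : ((l : ℂ) - a * x).re = l - a * x.re := by simp
  rw [hre]
  nlinarith [re_le_norm x]

lemma div_mem_slitPlane_of_re_pos (hz : 0 < z.re) (hw : 0 < w.re) : z / w ∈ slitPlane := by
  have hw0 : w ≠ 0 := by rintro rfl; exact hw.ne' zero_re
  by_contra h
  obtain ⟨hre, him⟩ : (z / w).re ≤ 0 ∧ (z / w).im = 0 := by simpa [mem_slitPlane_iff] using h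
  have hzw : z = ((z / w).re : ℂ) * w := by
    rw [(Complex.ext (by simp) (by simp [him]) : ((z / w).re : ℂ) = z / w), div_mul_cancel₀ _ hw0]
  have := congrArg re hzw
  rw [re_ofReal_mul] at this
  nlinarith

lemma re_add_ofReal_mul_pos {p : ℝ} (hp : 0 ≤ p) (hu : 0 < u.re) (hv : 0 < v.re) :
    0 < (u + p * v).re := by
  rw [add_re, re_ofReal_mul]
  positivity

/-- The ratio `φ_Y / φ_X` of the boundary generating functions at a zero `(x, y)` of the kernel,
as a function of `u = λ₁ - μ₁c₁x` and `v = λ₂ - μ₂c₂y`. -/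
noncomputable def couplingRatio (p1 p2 : ℝ) (u v : ℂ) : ℂ := (u + p2 * v) / (v + p1 * u)

lemma couplingRatio_mem_slitPlane (hp1 : 0 ≤ p1) (hp2 : 0 ≤ p2) (hu : 0 < u.re)
    (hv : 0 < v.re) : couplingRatio p1 p2 u v ∈ slitPlane :=
  div_mem_slitPlane_of_re_pos (re_add_ofReal_mul_pos hp2 hu hv) (re_add_ofReal_mul_pos hp1 hv hu)

lemma add_ofReal_mul_ne_zero {p : ℝ} (hp : 0 ≤ p) (hu : 0 < u.re) (hv : 0 < v.re) :
    u + p * v ≠ 0 := fun h => (re_add_ofReal_mul_pos hp hu hv).ne' (by rw [h, zero_re])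

/-- The point `x` of smallest modulus for which `(x, y)` is a zero of the kernel. -/
noncomputable def kernelRoot (a l b m : ℝ) (y : ℂ) : ℂ :=
  smallRoot a l (a + l + b + m - joukowski (b : ℂ) m y)

/-- The logarithm of the coupling ratio along the branch `x = kernelRoot a l b m y`. -/
noncomputable def logCoupling (a l b m p1 p2 : ℝ) (y : ℂ) : ℂ :=
  log (couplingRatio p1 p2 (l - a * kernelRoot a l b m y) (m - b * y))

lemma re_sub_mul_kernelRoot_pos (ha : 0 < a) (hal : a < l)
    (hw : 2 * √(a * l) < semiMajor a l (a + l + b + m - joukowski (b : ℂ) m y)) :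
    0 < ((l : ℂ) - a * kernelRoot a l b m y).re :=
  re_sub_mul_pos ha hal (mul_norm_smallRoot_sq_lt ha (ha.trans hal) hw).le

lemma differentiableAt_kernelRoot (hal : 0 ≤ a * l) (hy0 : y ≠ 0)
    (hw : 2 * √(a * l) < semiMajor a l (a + l + b + m - joukowski (b : ℂ) m y)) :
    DifferentiableAt ℂ (kernelRoot a l b m) y :=
  (differentiableAt_smallRoot hal hw).comp y ((differentiableAt_joukowski _ _ hy0).const_sub _)

lemma differentiableAt_logCoupling (ha : 0 < a) (hal : a < l) (hb : 0 < b) (hbm : b < m)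
    (hp1 : 0 ≤ p1) (hp2 : 0 ≤ p2) (hy0 : y ≠ 0) (hy : b * ‖y‖ ^ 2 ≤ m)
    (hw : 2 * √(a * l) < semiMajor a l (a + l + b + m - joukowski (b : ℂ) m y)) :
    DifferentiableAt ℂ (logCoupling a l b m p1 p2) y := by
  have hu := re_sub_mul_kernelRoot_pos ha hal hw
  have hv := re_sub_mul_pos hb hbm hy
  have hroot := differentiableAt_kernelRoot (by nlinarith) hy0 hw
  refine DifferentiableAt.clog ?_ (couplingRatio_mem_slitPlane hp1 hp2 hu hv)
  have := add_ofReal_mul_ne_zero hp1 hv hu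
  unfold couplingRatio
  fun_prop (disch := assumption)

lemma exp_logCoupling_mul (ha : 0 < a) (hal : a < l) (hb : 0 < b) (hbm : b < m)
    (hp1 : 0 ≤ p1) (hp2 : 0 ≤ p2) (hy : b * ‖y‖ ^ 2 ≤ m)
    (hw : 2 * √(a * l) < semiMajor a l (a + l + b + m - joukowski (b : ℂ) m y))
    (hrel : ((m - b * y) + p1 * (l - a * kernelRoot a l b m y)) * u
      = ((l - a * kernelRoot a l b m y) + p2 * (m - b * y)) * v) :
    exp (logCoupling a l b m p1 p2 y) * v = u := by
  have hx := re_sub_mul_kernelRoot_pos ha hal hw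
  have hy := re_sub_mul_pos hb hbm hy
  rw [logCoupling, exp_log (slitPlane_ne_zero (couplingRatio_mem_slitPlane hp1 hp2 hx hy)),
    couplingRatio, div_mul_eq_mul_div, div_eq_iff (add_ofReal_mul_ne_zero hp1 hy hx), ← hrel,
    mul_comm]

lemma two_mul_sqrt_lt_semiMajor_sub_joukowski (hb : 0 < b) (hm : 0 < m) (hR : 0 < R)
    (hRs : joukowski b m R < a + l + b + m - 2 * √(a * l)) (hRy : R ≤ ‖y‖)
    (hy : b * ‖y‖ ^ 2 ≤ m) :
    2 * √(a * l) < semiMajor a l (a + l + b + m - joukowski (b : ℂ) m y) := by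
  have hy0 := hR.trans_le hRy
  have hRm : b * R ^ 2 ≤ m := hy.trans' (by gcongr)
  have hJ : ‖joukowski (b : ℂ) m y‖ ≤ joukowski b m R :=
    (norm_joukowski_le hb.le hm.le (norm_pos_iff.1 hy0)).trans
      ((strictAntiOn_joukowski hb).antitoneOn ⟨hR, hRm⟩ ⟨hy0, hy⟩ hRy)
  have hre : a + l + b + m - (joukowski (b : ℂ) m y).re
      ≤ ‖(a : ℂ) + l + b + m - joukowski (b : ℂ) m y‖ := by
    simpa using re_le_norm ((a : ℂ) + l + b + m - joukowski (b : ℂ) m y)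
  refine lt_of_lt_of_le ?_ (norm_le_semiMajor _ _ _)
  linarith [re_le_norm (joukowski (b : ℂ) m y)]

lemma exists_inner_radius (ha : 0 < a) (hal : a < l) (b m : ℝ) :
    ∃ R, 0 < R ∧ R < 1 ∧ joukowski b m R < a + l + b + m - 2 * √(a * l) := by
  have hcont : ContinuousAt (joukowski b m) 1 := by
    unfold joukowski
    fun_prop (disch := exact one_ne_zero)
  have hlt : joukowski b m 1 < a + l + b + m - 2 * √(a * l) := by
    rw [joukowski_one]
    linarith [two_mul_sqrt_lt_add ha hal]
  have hnear : ∀ᶠ R in 𝓝 (1 : ℝ), 0 < R ∧ joukowski b m R < a + l + b + m - 2 * √(a * l) :=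
    (eventually_gt_nhds one_pos).and (hcont.eventually_lt continuousAt_const hlt)
  obtain ⟨R, ⟨hR0, hR⟩, hR1⟩ :=
    ((hnear.filter_mono nhdsWithin_le_nhds).and (self_mem_nhdsWithin (s := Iio 1))).exists
  exact ⟨R, hR0, hR1, hR⟩

lemma joukowski_eq_two_mul_sqrt (hb : 0 ≤ b) (hr0 : 0 < r) (hr : b * r ^ 2 = m) :
    joukowski b m r = 2 * √(b * m) := by
  rw [joukowski, ← hr, show b * (b * r ^ 2) = (b * r) ^ 2 by ring, Real.sqrt_sq (by positivity)]
  field_simp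
  ring

lemma one_lt_of_mul_sq_eq (hb : 0 < b) (hbm : b < m) (hr0 : 0 < r) (hr : b * r ^ 2 = m) :
    1 < r := by
  by_contra! h
  exact (mul_sq_lt_of_le_one hb hbm hr0.le h).ne hr

lemma differentiableAt_logCoupling_of_mem_annulus (ha : 0 < a) (hal : a < l) (hb : 0 < b)
    (hbm : b < m) (hp1 : 0 ≤ p1) (hp2 : 0 ≤ p2) (hr : b * r ^ 2 = m) (hR : 0 < R)
    (hRs : joukowski b m R < a + l + b + m - 2 * √(a * l)) (hRy : R ≤ ‖y‖) (hyr : ‖y‖ ≤ r) :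
    DifferentiableAt ℂ (logCoupling a l b m p1 p2) y := by
  have hy : b * ‖y‖ ^ 2 ≤ m := hr.le.trans' (by gcongr)
  exact differentiableAt_logCoupling ha hal hb hbm hp1 hp2 (norm_pos_iff.1 (hR.trans_le hRy)) hy
    (two_mul_sqrt_lt_semiMajor_sub_joukowski hb (hb.trans hbm) hR hRs hRy hy)

lemma joukowski_lt_sub_two_mul_sqrt (ha : 0 < a) (hal : a < l) (hb : 0 < b) (hbm : b < m)
    (hr0 : 0 < r) (hr : b * r ^ 2 = m) : joukowski b m r < a + l + b + m - 2 * √(a * l) := by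
  rw [joukowski_eq_two_mul_sqrt hb.le hr0 hr]
  linarith [two_mul_sqrt_lt_add ha hal, two_mul_sqrt_lt_add hb hbm]

lemma continuousOn_logCoupling_sphere (ha : 0 < a) (hal : a < l) (hb : 0 < b) (hbm : b < m)
    (hp1 : 0 ≤ p1) (hp2 : 0 ≤ p2) (hr0 : 0 < r) (hr : b * r ^ 2 = m) :
    ContinuousOn (logCoupling a l b m p1 p2) (sphere 0 r) := fun ζ hζ => by
  have hζr := mem_sphere_zero_iff_norm.1 hζ
  exact (differentiableAt_logCoupling_of_mem_annulus ha hal hb hbm hp1 hp2 hr hr0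
    (joukowski_lt_sub_two_mul_sqrt ha hal hb hbm hr0 hr) hζr.ge
    hζr.le).continuousAt.continuousWithinAt

lemma differentiableAt_ellipseInt_logCoupling (ha : 0 < a) (hal : a < l) (hb : 0 < b)
    (hbm : b < m) (hp1 : 0 ≤ p1) (hp2 : 0 ≤ p2) (hr0 : 0 < r) (hr : b * r ^ 2 = m)
    (hw : 2 * √(b * m) < semiMajor b m w) :
    DifferentiableAt ℂ (ellipseInt b m r (logCoupling a l b m p1 p2)) w := by
  rw [← joukowski_eq_two_mul_sqrt hb.le hr0 hr] at hw
  exact differentiableAt_ellipseInt hb.le (hb.trans hbm).le hr0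
    (continuousOn_logCoupling_sphere ha hal hb hbm hp1 hp2 hr0 hr) hw.ne'

lemma exp_logCoupling_smallRoot_mul (ha : 0 < a) (hal : a < l) (hb : 0 < b) (hbm : b < m)
    (hp1 : 0 ≤ p1) (hp2 : 0 ≤ p2)
    (hrel : ∀ x y : ℂ, x ≠ 0 → y ≠ 0 → ‖x‖ < 1 → ‖y‖ < 1 →
      joukowski (a : ℂ) l x + joukowski (b : ℂ) m y = a + l + b + m →
      ((m - b * y) + p1 * (l - a * x)) * Φ y = ((l - a * x) + p2 * (m - b * y)) * Ψ x)
    (hwb : b + m < semiMajor b m w) (hwa : a + l < semiMajor a l (a + l + b + m - w)) :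
    exp (logCoupling a l b m p1 p2 (smallRoot b m w)) * Ψ (smallRoot a l (a + l + b + m - w))
      = Φ (smallRoot b m w) := by
  have hl := ha.trans hal
  have hm := hb.trans hbm
  have hyb := (two_mul_sqrt_lt_add hb hbm).trans hwb
  have hxa := (two_mul_sqrt_lt_add ha hal).trans hwa
  have hJy := joukowski_smallRoot hb hm hyb
  have hroot : kernelRoot a l b m (smallRoot b m w)
      = smallRoot a l (a + l + b + m - w) := by rw [kernelRoot, hJy]
  refine exp_logCoupling_mul ha hal hb hbm hp1 hp2 (mul_norm_smallRoot_sq_lt hb hm hyb).le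
    (by rwa [hJy]) ?_
  rw [hroot]
  refine hrel _ _ (smallRoot_ne_zero ha hl hxa) (smallRoot_ne_zero hb hm hyb)
    (norm_smallRoot_lt_one ha hal hwa) (norm_smallRoot_lt_one hb hbm hwb) ?_
  rw [joukowski_smallRoot ha hl hxa, hJy, sub_add_cancel]

lemma comp_smallRoot_eq_mul_cexp_ellipseInt (ha : 0 < a) (hal : a < l) (hb : 0 < b)
    (hbm : b < m) (hp1 : 0 ≤ p1) (hp2 : 0 ≤ p2) (hr0 : 0 < r) (hr : b * r ^ 2 = m)
    (hΦ : DifferentiableOn ℂ Φ (ball 0 1)) (hΨ : DifferentiableOn ℂ Ψ (ball 0 1)) {C : ℝ}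
    (hΦC : ∀ y ∈ ball 0 1, ‖Φ y‖ ≤ C) (hΨC : ∀ x ∈ ball 0 1, ‖Ψ x‖ ≤ C)
    (hrel : ∀ x y : ℂ, x ≠ 0 → y ≠ 0 → ‖x‖ < 1 → ‖y‖ < 1 →
      joukowski (a : ℂ) l x + joukowski (b : ℂ) m y = a + l + b + m →
      ((m - b * y) + p1 * (l - a * x)) * Φ y = ((l - a * x) + p2 * (m - b * y)) * Ψ x)
    (hw : b + m < semiMajor b m w) :
    Φ (smallRoot b m w) = Φ 0 * exp (ellipseInt b m r (logCoupling a l b m p1 p2) w) := by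
  have hm := hb.trans hbm
  obtain ⟨R, hR0, hR1, hRs⟩ := exists_inner_radius ha hal b m
  have hr1 := one_lt_of_mul_sq_eq hb hbm hr0 hr
  have hRm : b * R ^ 2 ≤ m := hr.le.trans' (by gcongr; linarith)
  have hΛd : ∀ ζ : ℂ, R ≤ ‖ζ‖ → ‖ζ‖ ≤ r → DifferentiableAt ℂ (logCoupling a l b m p1 p2) ζ :=
    fun ζ => differentiableAt_logCoupling_of_mem_annulus ha hal hb hbm hp1 hp2 hr hR0 hRs
  have hΛR : ContinuousOn (logCoupling a l b m p1 p2) (sphere 0 R) := fun ζ hζ => by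
    have hζR := mem_sphere_zero_iff_norm.1 hζ
    exact (hΛd ζ hζR.ge (by linarith)).continuousAt.continuousWithinAt
  refine comp_smallRoot_eq_mul_cexp ha hal hb hbm hR0 hR1 hΦ hΨ hΦC hΨC
    (B := ellipseInt b m R (logCoupling a l b m p1 p2)) (fun w hw => ?_) (fun w hw => ?_)
    (tendsto_ellipseInt_cocompact hr0
      (continuousOn_logCoupling_sphere ha hal hb hbm hp1 hp2 hr0 hr)) (fun w hwb hwR hwa => ?_) hw
  · exact (differentiableAt_ellipseInt_logCoupling ha hal hb hbm hp1 hp2 hr0 hr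
      hw).differentiableWithinAt
  · exact (differentiableAt_ellipseInt hb.le hm.le hR0 hΛR (ne_of_lt hw)).differentiableWithinAt
  · have hyR := (lt_norm_smallRoot_iff hb hm hR0 hRm ((two_mul_sqrt_lt_add hb hbm).trans hwb)).2 hwR
    have hsplit := ellipseInt_sub_ellipseInt hb hR0 hr hΛd hyR
      ((norm_smallRoot_lt_one hb hbm hwb).trans hr1)
    rw [joukowski_smallRoot hb hm ((two_mul_sqrt_lt_add hb hbm).trans hwb)] at hsplit
    rw [hsplit, exp_logCoupling_smallRoot_mul ha hal hb hbm hp1 hp2 hrel hwb hwa]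

lemma eq_at_one_mul_cexp_ellipseInt (ha : 0 < a) (hal : a < l) (hb : 0 < b)
    (hbm : b < m) (hp1 : 0 ≤ p1) (hp2 : 0 ≤ p2) (hr0 : 0 < r) (hr : b * r ^ 2 = m)
    (hΦd : DifferentiableOn ℂ Φ (ball 0 1)) (hΨd : DifferentiableOn ℂ Ψ (ball 0 1))
    (hΦc : ContinuousOn Φ (closedBall 0 1)) (hΨc : ContinuousOn Ψ (closedBall 0 1))
    (hrel : ∀ x y : ℂ, x ≠ 0 → y ≠ 0 → ‖x‖ < 1 → ‖y‖ < 1 →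
      joukowski (a : ℂ) l x + joukowski (b : ℂ) m y = a + l + b + m →
      ((m - b * y) + p1 * (l - a * x)) * Φ y = ((l - a * x) + p2 * (m - b * y)) * Ψ x) :
    Φ 1 = Φ 0 * exp (ellipseInt b m r (logCoupling a l b m p1 p2) (b + m)) := by
  have hm := hb.trans hbm
  obtain ⟨C₁, hC₁⟩ := (isCompact_closedBall (0 : ℂ) 1).exists_bound_of_continuousOn hΦc
  obtain ⟨C₂, hC₂⟩ := (isCompact_closedBall (0 : ℂ) 1).exists_bound_of_continuousOn hΨc
  have hcont : ContinuousAt (fun y => Φ 0 *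
      exp (ellipseInt b m r (logCoupling a l b m p1 p2) (joukowski (b : ℂ) m y))) 1 := by
    have hA : ContinuousAt (ellipseInt b m r (logCoupling a l b m p1 p2))
        (joukowski (b : ℂ) m 1) := by
      refine (differentiableAt_ellipseInt_logCoupling ha hal hb hbm hp1 hp2 hr0 hr ?_).continuousAt
      rw [joukowski_one, semiMajor_add hb.le hm.le]
      exact two_mul_sqrt_lt_add hb hbm
    exact continuousAt_const.mul
      (hA.comp (differentiableAt_joukowski _ _ one_ne_zero).continuousAt).cexp
  rw [← joukowski_one]
  refine eq_at_one_of_eqOn_punctured_ball ((hΦc 1 (by simp)).mono ball_subset_closedBall)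
    hcont.continuousWithinAt fun y hy0 hy1 => ?_
  have hym : b * ‖y‖ ^ 2 < m := mul_sq_lt_of_le_one hb hbm (norm_nonneg y) hy1.le
  have hw : b + m < semiMajor b m (joukowski (b : ℂ) m y) := by
    rw [semiMajor_joukowski hb.le hm.le hy0]
    exact add_lt_joukowski hb hbm (norm_pos_iff.2 hy0) hy1
  conv_lhs => rw [← smallRoot_joukowski hb hy0 hym]
  exact comp_smallRoot_eq_mul_cexp_ellipseInt ha hal hb hbm hp1 hp2 hr0 hr hΦd hΨd
    (fun z hz => (hC₁ z (ball_subset_closedBall hz)).trans (le_max_left C₁ C₂))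
    (fun z hz => (hC₂ z (ball_subset_closedBall hz)).trans (le_max_right C₁ C₂)) hrel hw

end Coupling

section OriginFormula

variable {la1 la2 mu1 mu2 c1 c2 p1 p2 r : ℝ} {π : ℕ × ℕ → ℝ}

lemma kernel_eq_joukowski {K : Type*} [Field K] {a l b m x y : K} (hx : x ≠ 0) (hy : y ≠ 0) :
    y * (x - 1) * (l - a * x) + x * (y - 1) * (m - b * y)
      = x * y * (a + l + b + m - (joukowski a l x + joukowski b m y)) := by
  unfold joukowski
  field_simp
  ring

lemma IsInvariantDist.marginal_drift_eq_mul_cexp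
    (hπ : IsInvariantDist la1 la2 mu1 mu2 c1 c2 p1 p2 π) (ha : 0 < mu1 * c1)
    (hal : mu1 * c1 < la1) (hb : 0 < mu2 * c2) (hbm : mu2 * c2 < la2) (hp1 : 0 ≤ p1)
    (hp2 : 0 ≤ p2) (hr0 : 0 < r) (hr : mu2 * c2 * r ^ 2 = la2) :
    ((la1 + la2 * p2 - (mu1 * c1 + mu2 * c2 * p2) : ℝ) : ℂ) = ((la1 + la2 * p2) * π (0, 0) : ℝ) *
      exp (ellipseInt (mu2 * c2) la2 r (logCoupling (mu1 * c1) la1 (mu2 * c2) la2 p1 p2)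
        ((mu2 * c2 : ℝ) + la2)) := by
  have h := eq_at_one_mul_cexp_ellipseInt ha hal hb hbm hp1 hp2 hr0 hr
    hπ.differentiableOn_boundaryGenFun hπ.comp_swap.differentiableOn_boundaryGenFun
    hπ.continuousOn_boundaryGenFun hπ.comp_swap.continuousOn_boundaryGenFun
    fun x y hx hy hx1 hy1 hxy => ?_
  · rw [hπ.boundaryGenFun_one, boundaryGenFun_zero] at h
    exact_mod_cast h
  · have hker := kernel_eq_joukowski (a := ((mu1 * c1 : ℝ) : ℂ)) (l := la1)
      (b := ((mu2 * c2 : ℝ) : ℂ)) (m := la2) hx hy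
    rw [hxy, sub_self, mul_zero] at hker
    push_cast at hker ⊢
    exact hπ.boundary_relation hx1 hy hy1.le hker

end OriginFormula

/-! ### Evaluation of the integral -/

section RealRoot

variable {a l w x : ℝ}

/-- The smaller real root of `a x² - w x + l`, for real `w ≥ 2√(al)`. -/
noncomputable def realRoot (a l w : ℝ) : ℝ := (smallRoot a l w).re

lemma two_mul_sqrt_lt_semiMajor_ofReal (hw : 2 * √(a * l) < w) :
    2 * √(a * l) < semiMajor a l w :=
  hw.trans_le ((le_abs_self w).trans ((norm_real w).symm.trans_le (norm_le_semiMajor a l w)))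

lemma ofReal_realRoot (ha : 0 < a) (hl : 0 < l) (hw : 2 * √(a * l) < w) :
    (realRoot a l w : ℂ) = smallRoot a l w := by
  have h := smallRoot_conj ha hl (two_mul_sqrt_lt_semiMajor_ofReal hw)
  rw [conj_ofReal] at h
  exact conj_eq_iff_re.1 h.symm

lemma joukowski_realRoot (ha : 0 < a) (hl : 0 < l) (hw : 2 * √(a * l) < w) :
    joukowski a l (realRoot a l w) = w := by
  have h := joukowski_smallRoot ha hl (two_mul_sqrt_lt_semiMajor_ofReal hw)
  rw [← ofReal_realRoot ha hl hw, ← ofReal_joukowski] at h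
  exact_mod_cast h

lemma realRoot_pos (ha : 0 < a) (hl : 0 < l) (hw : 2 * √(a * l) < w) : 0 < realRoot a l w := by
  have hJ := joukowski_realRoot ha hl hw
  by_contra! h
  have : joukowski a l (realRoot a l w) ≤ 0 :=
    add_nonpos (mul_nonpos_of_nonneg_of_nonpos ha.le h) (div_nonpos_of_nonneg_of_nonpos hl.le h)
  linarith [Real.sqrt_nonneg (a * l)]

lemma mul_realRoot_sq_lt (ha : 0 < a) (hl : 0 < l) (hw : 2 * √(a * l) < w) :
    a * realRoot a l w ^ 2 < l := by
  have h := mul_norm_smallRoot_sq_lt ha hl (two_mul_sqrt_lt_semiMajor_ofReal hw)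
  rwa [← ofReal_realRoot ha hl hw, norm_real, Real.norm_eq_abs, sq_abs] at h

lemma realRoot_joukowski (ha : 0 < a) (hx : x ≠ 0) (hxl : a * x ^ 2 < l) :
    realRoot a l (joukowski a l x) = x := by
  rw [realRoot, ofReal_joukowski, smallRoot_joukowski ha (by exact_mod_cast hx) (by simpa),
    ofReal_re]

lemma hasDerivAt_realRoot (ha : 0 < a) (hl : 0 < l) (hw : 2 * √(a * l) < w) :
    HasDerivAt (realRoot a l) (a - l / realRoot a l w ^ 2)⁻¹ w := by
  have hx := (realRoot_pos ha hl hw).ne'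
  have hJ : HasDerivAt (joukowski a l) (a - l / realRoot a l w ^ 2) (realRoot a l w) := by
    refine (((hasDerivAt_id _).const_mul a).add ((hasDerivAt_inv hx).const_mul l)).congr_deriv ?_
    field_simp
    ring
  have hcont : ContinuousAt (realRoot a l) w :=
    (differentiableAt_smallRoot (by positivity)
      (two_mul_sqrt_lt_semiMajor_ofReal hw)).hasDerivAt.real_of_complex.continuousAt
  refine hJ.of_local_left_inverse hcont (sub_ne_zero.2 fun h => ?_)
    ((eventually_gt_nhds hw).mono fun _ => joukowski_realRoot ha hl)
  rw [eq_div_iff (pow_ne_zero 2 hx)] at h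
  exact (mul_realRoot_sq_lt ha hl hw).ne h

end RealRoot

section CriticalCircle

variable {b m r t : ℝ} {y : ℂ}

lemma div_eq_mul_conj (hr0 : 0 < r) (hr : b * r ^ 2 = m) (hy : ‖y‖ = r) :
    m / y = b * conj y := by
  have h0 : y ≠ 0 := norm_pos_iff.1 (hy ▸ hr0)
  rw [div_eq_iff h0, mul_assoc, conj_mul', hy, ← hr]
  push_cast
  ring

lemma joukowski_eq_ofReal (hr0 : 0 < r) (hr : b * r ^ 2 = m) (hy : ‖y‖ = r) :
    joukowski (b : ℂ) m y = (2 * b * y.re : ℝ) := by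
  rw [joukowski, div_eq_mul_conj hr0 hr hy, ← mul_add, add_conj]
  push_cast
  ring

lemma norm_circleMap_zero_of_pos (hr0 : 0 < r) (t : ℝ) : ‖circleMap 0 r t‖ = r := by
  rw [norm_circleMap_zero, abs_of_pos hr0]

lemma joukowski_circleMap (hr0 : 0 < r) (hr : b * r ^ 2 = m) :
    joukowski (b : ℂ) m (circleMap 0 r t) = (2 * b * r * Real.cos t : ℝ) := by
  rw [joukowski_eq_ofReal hr0 hr (norm_circleMap_zero_of_pos hr0 t), circleMap_zero_re,
    ← mul_assoc]

lemma deriv_circleMap_mul_sub_div_sq (hr0 : 0 < r) (hr : b * r ^ 2 = m) :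
    deriv (circleMap 0 r) t * (b - m / circleMap 0 r t ^ 2)
      = (-(2 * b * r * Real.sin t) : ℝ) := by
  have h0 : circleMap 0 r t ≠ 0 := circleMap_ne_center hr0.ne'
  calc deriv (circleMap 0 r) t * (b - m / circleMap 0 r t ^ 2)
      = I * (b * circleMap 0 r t - m / circleMap 0 r t) := by
        rw [deriv_circleMap]
        field_simp
    _ = I * (b * (circleMap 0 r t - conj (circleMap 0 r t))) := by
        rw [div_eq_mul_conj hr0 hr (norm_circleMap_zero_of_pos hr0 t), mul_sub (b : ℂ)]
    _ = (-(2 * b * r * Real.sin t) : ℝ) := by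
        rw [sub_conj, circleMap_zero_im]
        push_cast
        linear_combination (2 * b * r * Complex.sin t) * I_sq

lemma integral_eq_two_mul_I_mul_integral_im {F : ℝ → ℂ} (hF : Continuous F)
    (hsymm : ∀ t, F (2 * Real.pi - t) = -conj (F t)) :
    ∫ t in (0 : ℝ)..2 * Real.pi, F t = 2 * I * (∫ t in (0 : ℝ)..Real.pi, (F t).im : ℝ) := by
  have hint := fun u v => hF.intervalIntegrable (μ := MeasureTheory.volume) u v
  have hconj : ∀ u v, IntervalIntegrable (fun t => conj (F t)) MeasureTheory.volume u v :=
    fun u v => (continuous_conj.comp hF).intervalIntegrable u v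
  have hrefl : ∫ t in Real.pi..2 * Real.pi, F t = ∫ t in (0 : ℝ)..Real.pi, -conj (F t) := by
    have h := intervalIntegral.integral_comp_sub_left (a := 0) (b := Real.pi) F (2 * Real.pi)
    rw [show 2 * Real.pi - Real.pi = Real.pi by ring, sub_zero] at h
    simp only [← h, hsymm]
  rw [← intervalIntegral.integral_add_adjacent_intervals (hint 0 Real.pi) (hint _ _), hrefl,
    intervalIntegral.integral_neg, ← sub_eq_add_neg,
    ← intervalIntegral.integral_sub (hint _ _) (hconj _ _), ← intervalIntegral.integral_ofReal,
    ← intervalIntegral.integral_const_mul]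
  refine intervalIntegral.integral_congr fun t _ => ?_
  simp only [sub_conj]
  push_cast
  ring

/-- The density `2br sin t / (w - 2br cos t)` of the kernel of `ellipseInt b m r` on the critical
circle `b r² = m`, where the ellipse degenerates to a slit. -/
noncomputable def slitKernel (b r w t : ℝ) : ℝ :=
  2 * b * r * Real.sin t / (w - 2 * b * r * Real.cos t)

lemma slitKernel_two_pi_sub (b r w t : ℝ) :
    slitKernel b r w (2 * Real.pi - t) = -slitKernel b r w t := by
  simp only [slitKernel, Real.sin_two_pi_sub, Real.cos_two_pi_sub, mul_neg, neg_div]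

lemma circleMap_zero_two_pi_sub (r t : ℝ) :
    circleMap 0 r (2 * Real.pi - t) = conj (circleMap 0 r t) := by
  apply Complex.ext
  · rw [conj_re, circleMap_zero_re, circleMap_zero_re, Real.cos_two_pi_sub]
  · rw [conj_im, circleMap_zero_im, circleMap_zero_im, Real.sin_two_pi_sub, mul_neg]

lemma ellipseInt_eq_integral_slitKernel (hr0 : 0 < r) (hr : b * r ^ 2 = m) (f : ℂ → ℂ) (w : ℝ) :
    ellipseInt b m r f w = (2 * Real.pi * I)⁻¹ *
      ∫ t in (0 : ℝ)..2 * Real.pi, f (circleMap 0 r t) * slitKernel b r w t := by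
  rw [ellipseInt, circleIntegral]
  congr 1
  refine intervalIntegral.integral_congr fun t _ => ?_
  simp only [smul_eq_mul]
  rw [mul_div_assoc', mul_left_comm, deriv_circleMap_mul_sub_div_sq hr0 hr,
    joukowski_circleMap hr0 hr, ← ofReal_sub, mul_div_assoc, ← ofReal_div, neg_div, ← div_neg,
    neg_sub, slitKernel]

lemma ellipseInt_eq_ofReal {w : ℝ} (hr0 : 0 < r) (hr : b * r ^ 2 = m)
    (hw : ∀ t, 2 * b * r * Real.cos t < w) {f : ℂ → ℂ} (hf : ContinuousOn f (sphere 0 r))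
    (hconj : ∀ ζ : ℂ, ‖ζ‖ = r → f (conj ζ) = conj (f ζ)) :
    ellipseInt b m r f w = ((1 / Real.pi * ∫ t in (0 : ℝ)..Real.pi,
      (f (circleMap 0 r t)).im * slitKernel b r w t : ℝ) : ℂ) := by
  have hk : Continuous (slitKernel b r w) :=
    Continuous.div (by fun_prop) (by fun_prop) fun t => (sub_pos.2 (hw t)).ne'
  have hF : Continuous fun t : ℝ => f (circleMap 0 r t) * (slitKernel b r w t : ℂ) :=
    (continuous_comp_circleMap hr0.le hf).mul (continuous_ofReal.comp hk)
  rw [ellipseInt_eq_integral_slitKernel hr0 hr,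
    integral_eq_two_mul_I_mul_integral_im hF fun t => ?_]
  · have hpi : (Real.pi : ℂ) ≠ 0 := by exact_mod_cast Real.pi_ne_zero
    simp only [im_mul_ofReal, ofReal_mul, ofReal_div, ofReal_one]
    field_simp
  · rw [slitKernel_two_pi_sub, circleMap_zero_two_pi_sub,
      hconj _ (norm_circleMap_zero_of_pos hr0 t), map_mul, conj_ofReal, ofReal_neg, mul_neg]

end CriticalCircle

section CouplingArgument

variable {a l b m p1 p2 r : ℝ} {y v : ℂ}

lemma arg_eq_arctan {z : ℂ} (hz : 0 < z.re) : arg z = Real.arctan (z.im / z.re) := by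
  have h := abs_lt.1 (abs_arg_lt_pi_div_two_iff.2 (Or.inl hz))
  rw [← tan_arg, Real.arctan_tan (by linarith [h.1]) h.2]

lemma couplingRatio_conj (p1 p2 : ℝ) (u v : ℂ) :
    couplingRatio p1 p2 (conj u) (conj v) = conj (couplingRatio p1 p2 u v) := by
  simp [couplingRatio]

lemma arg_couplingRatio_ofReal {u : ℝ} (hp1 : 0 ≤ p1) (hp2 : 0 ≤ p2) (hu : 0 < u)
    (hv : 0 < v.re) : arg (couplingRatio p1 p2 u v) = Real.arctan
      (-((1 - p1 * p2) * u * v.im) / ((u + p2 * v.re) * (v.re + p1 * u) + p2 * v.im ^ 2)) := by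
  have hN : 0 < (v.re + p1 * u) ^ 2 + v.im ^ 2 := by positivity
  have hre : (couplingRatio p1 p2 u v).re
      = ((u + p2 * v.re) * (v.re + p1 * u) + p2 * v.im ^ 2)
        / ((v.re + p1 * u) ^ 2 + v.im ^ 2) := by
    simp only [couplingRatio, div_re, normSq_apply, add_re, add_im, re_ofReal_mul, im_ofReal_mul,
      ofReal_re, ofReal_im]
    ring
  have him : (couplingRatio p1 p2 u v).im
      = -((1 - p1 * p2) * u * v.im) / ((v.re + p1 * u) ^ 2 + v.im ^ 2) := by
    simp only [couplingRatio, div_im, normSq_apply, add_re, add_im, re_ofReal_mul, im_ofReal_mul,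
      ofReal_re, ofReal_im]
    ring
  rw [arg_eq_arctan (by rw [hre]; positivity), hre, him, div_div_div_cancel_right₀ hN.ne']

lemma two_mul_sqrt_lt_sub_mul {c : ℝ} (ha : 0 < a) (hal : a < l) (hb : 0 < b) (hbm : b < m)
    (hr0 : 0 < r) (hr : b * r ^ 2 = m) (hc : c ≤ r) :
    2 * √(a * l) < a + l + b + m - 2 * b * c := by
  have h := joukowski_lt_sub_two_mul_sqrt ha hal hb hbm hr0 hr
  have hJ : joukowski b m r = 2 * b * r := by
    rw [joukowski, ← hr]
    field_simp
    ring
  have : 2 * b * c ≤ 2 * b * r := by gcongr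
  linarith

lemma kernelRoot_eq_ofReal (ha : 0 < a) (hal : a < l) (hb : 0 < b) (hbm : b < m)
    (hr0 : 0 < r) (hr : b * r ^ 2 = m) (hy : ‖y‖ = r) :
    kernelRoot a l b m y = (realRoot a l (a + l + b + m - 2 * b * y.re) : ℂ) := by
  have hw := two_mul_sqrt_lt_sub_mul ha hal hb hbm hr0 hr (hy ▸ re_le_norm y)
  rw [ofReal_realRoot ha (ha.trans hal) hw, kernelRoot, joukowski_eq_ofReal hr0 hr hy]
  push_cast
  rfl

lemma logCoupling_conj (ha : 0 < a) (hal : a < l) (hb : 0 < b) (hbm : b < m) (hp1 : 0 ≤ p1)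
    (hp2 : 0 ≤ p2) (hr0 : 0 < r) (hr : b * r ^ 2 = m) (hy : ‖y‖ = r) :
    logCoupling a l b m p1 p2 (conj y) = conj (logCoupling a l b m p1 p2 y) := by
  have hroot := kernelRoot_eq_ofReal ha hal hb hbm hr0 hr hy
  have hw := two_mul_sqrt_lt_semiMajor_sub_joukowski hb (hb.trans hbm) hr0
    (joukowski_lt_sub_two_mul_sqrt ha hal hb hbm hr0 hr) hy.ge (by rw [hy, hr])
  have hslit := couplingRatio_mem_slitPlane hp1 hp2 (re_sub_mul_kernelRoot_pos ha hal hw)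
    (re_sub_mul_pos hb hbm (hy ▸ hr.le))
  rw [logCoupling, logCoupling, ← log_conj _ (slitPlane_arg_ne_pi hslit), ← couplingRatio_conj,
    kernelRoot_eq_ofReal ha hal hb hbm hr0 hr (by rwa [norm_conj]), conj_re, hroot]
  simp only [map_sub, map_mul, conj_ofReal]

end CouplingArgument

section Theta

variable {la1 la2 mu1 mu2 c1 c2 p1 p2 x : ℝ} {y : ℂ}

/-- The denominator in the definition of `ThetaY`. -/
noncomputable def thetaDenom (la1 la2 mu1 mu2 c1 c2 p1 p2 x : ℝ) : ℝ :=
  (1 - p1 * p2) * (mu1 * c1 * x ^ 2 - (la1 + la2 + mu1 * c1 + mu2 * c2) * x + la1)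
    - 2 * RY la1 la2 mu1 mu2 c1 c2 p1 p2 x

lemma continuousAt_ThetaY (h : thetaDenom la1 la2 mu1 mu2 c1 c2 p1 p2 x ≠ 0) :
    ContinuousAt (ThetaY la1 la2 mu1 mu2 c1 c2 p1 p2) x := by
  unfold thetaDenom RY at h
  unfold ThetaY Delta2 RY
  fun_prop (disch := assumption)

lemma h1r_one (la1 la2 mu1 mu2 c1 c2 x : ℝ) :
    h1r la1 la2 mu1 mu2 c1 c2 x 1 = (x - 1) * (la1 - mu1 * c1 * x) := by
  unfold h1r
  ring

lemma sqrt_neg_Delta2 (hb : 0 ≤ mu2 * c2) (hx : 0 < x) (hy : mu2 * c2 * ‖y‖ ^ 2 = la2)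
    (him : 0 ≤ y.im) (hJ : joukowski (mu1 * c1) la1 x
      = mu1 * c1 + la1 + mu2 * c2 + la2 - 2 * (mu2 * c2) * y.re) :
    √(-Delta2 la1 la2 mu1 mu2 c1 c2 x) = 2 * (mu2 * c2) * x * y.im := by
  have hn : mu2 * c2 * (y.re ^ 2 + y.im ^ 2) = la2 := by
    rw [← hy, Complex.sq_norm, normSq_apply]
    ring
  have hk : mu1 * c1 * x ^ 2 - (la1 + la2 + mu1 * c1 + mu2 * c2) * x + la1
      = -(2 * (mu2 * c2) * y.re * x) := by
    unfold joukowski at hJ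
    field_simp at hJ
    linear_combination hJ
  have hsq : -Delta2 la1 la2 mu1 mu2 c1 c2 x = (2 * (mu2 * c2) * x * y.im) ^ 2 := by
    rw [Delta2, hk]
    linear_combination -4 * (mu2 * c2) * x ^ 2 * hn
  rw [hsq, Real.sqrt_sq (by positivity)]

lemma mul_thetaDenom (hx : x ≠ 0) (hy : mu2 * c2 * ‖y‖ ^ 2 = la2)
    (hJ : joukowski (mu1 * c1) la1 x
      = mu1 * c1 + la1 + mu2 * c2 + la2 - 2 * (mu2 * c2) * y.re) :
    (la1 - mu1 * c1 * x) * thetaDenom la1 la2 mu1 mu2 c1 c2 p1 p2 x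
      = 2 * x * ((la1 - mu1 * c1 * x + p2 * (la2 - mu2 * c2 * y.re))
        * (la2 - mu2 * c2 * y.re + p1 * (la1 - mu1 * c1 * x)) + p2 * (mu2 * c2 * y.im) ^ 2) := by
  have hn : mu2 * c2 * (y.re ^ 2 + y.im ^ 2) = la2 := by
    rw [← hy, Complex.sq_norm, normSq_apply]
    ring
  unfold joukowski at hJ
  field_simp at hJ
  unfold thetaDenom RY
  linear_combination ((la1 - mu1 * c1 * x) * (1 + p1 * p2) + 2 * p2 * la2) * hJ
    - 2 * x * p2 * (mu2 * c2) * hn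

lemma re_ofReal_sub_mul (a b : ℝ) (z : ℂ) : ((a : ℂ) - b * z).re = a - b * z.re := by
  rw [sub_re, ofReal_re, re_ofReal_mul]

lemma im_ofReal_sub_mul (a b : ℝ) (z : ℂ) : ((a : ℂ) - b * z).im = -(b * z.im) := by
  rw [sub_im, ofReal_im, im_ofReal_mul, zero_sub]

lemma thetaDenom_pos (hp1 : 0 ≤ p1) (hp2 : 0 ≤ p2) (hx : 0 < x) (hu : 0 < la1 - mu1 * c1 * x)
    (hv : 0 < la2 - mu2 * c2 * y.re) (hy : mu2 * c2 * ‖y‖ ^ 2 = la2)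
    (hJ : joukowski (mu1 * c1) la1 x
      = mu1 * c1 + la1 + mu2 * c2 + la2 - 2 * (mu2 * c2) * y.re) :
    0 < thetaDenom la1 la2 mu1 mu2 c1 c2 p1 p2 x := by
  refine pos_of_mul_pos_right ?_ hu.le
  rw [mul_thetaDenom hx.ne' hy hJ]
  positivity

lemma arg_couplingRatio_eq_ThetaY (hb : 0 ≤ mu2 * c2) (hp1 : 0 ≤ p1) (hp2 : 0 ≤ p2) (hx : 0 < x)
    (hu : 0 < la1 - mu1 * c1 * x) (hv : 0 < la2 - mu2 * c2 * y.re)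
    (hy : mu2 * c2 * ‖y‖ ^ 2 = la2) (him : 0 ≤ y.im) (hJ : joukowski (mu1 * c1) la1 x
      = mu1 * c1 + la1 + mu2 * c2 + la2 - 2 * (mu2 * c2) * y.re) :
    arg (couplingRatio p1 p2 (la1 - mu1 * c1 * x : ℝ) (la2 - (mu2 * c2 : ℝ) * y))
      = ThetaY la1 la2 mu1 mu2 c1 c2 p1 p2 x := by
  have hden := (thetaDenom_pos hp1 hp2 hx hu hv hy hJ).ne'
  have hmul := mul_thetaDenom (p1 := p1) (p2 := p2) hx.ne' hy hJ
  have hre := re_ofReal_sub_mul la2 (mu2 * c2) y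
  have him' := im_ofReal_sub_mul la2 (mu2 * c2) y
  rw [arg_couplingRatio_ofReal hp1 hp2 hu (hv.trans_eq hre.symm), ThetaY,
    sqrt_neg_Delta2 hb hx hy him hJ, ← thetaDenom, hre, him', neg_sq]
  congr 1
  rw [div_eq_div_iff (by positivity) hden]
  linear_combination (1 - p1 * p2) * (mu2 * c2) * y.im * hmul

end Theta

section Arc

variable {a l b m r x : ℝ}

/-- The real value of `kernelRoot` at the point `r e^{it}` of the critical circle `b r² = m`; it
sweeps the interval between the branch points of the kernel. -/
noncomputable def arcRoot (a l b m r t : ℝ) : ℝ :=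
  realRoot a l (a + l + b + m - 2 * b * (r * Real.cos t))

lemma mul_cos_lt_add (hb : 0 < b) (hbm : b < m) (hr0 : 0 < r) (hr : b * r ^ 2 = m) (t : ℝ) :
    2 * b * r * Real.cos t < b + m := by
  have h1 := one_lt_of_mul_sq_eq hb hbm hr0 hr
  have h2 : 2 * b * r * Real.cos t ≤ 2 * b * r :=
    mul_le_of_le_one_right (by positivity) (Real.cos_le_one t)
  nlinarith [mul_pos hb (sq_pos_of_pos (sub_pos.2 h1))]

lemma arcRoot_eq {t : ℝ} (ha : 0 < a) (hal : a < l) (hx0 : 0 < x) (hx1 : x < 1)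
    (h : joukowski a l x = a + l + b + m - 2 * b * (r * Real.cos t)) :
    arcRoot a l b m r t = x := by
  rw [arcRoot, ← h, realRoot_joukowski ha hx0.ne' (mul_sq_lt_of_le_one ha hal hx0.le hx1.le)]

variable (ha : 0 < a) (hal : a < l) (hb : 0 < b) (hbm : b < m) (hr0 : 0 < r)
  (hr : b * r ^ 2 = m) (t : ℝ)

include ha hal hb hbm hr0 hr

lemma two_mul_sqrt_lt_sub_cos :
    2 * √(a * l) < a + l + b + m - 2 * b * (r * Real.cos t) :=
  two_mul_sqrt_lt_sub_mul ha hal hb hbm hr0 hr (mul_le_of_le_one_right hr0.le (Real.cos_le_one t))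

lemma arcRoot_pos : 0 < arcRoot a l b m r t :=
  realRoot_pos ha (ha.trans hal) (two_mul_sqrt_lt_sub_cos ha hal hb hbm hr0 hr t)

lemma mul_arcRoot_sq_lt : a * arcRoot a l b m r t ^ 2 < l :=
  mul_realRoot_sq_lt ha (ha.trans hal) (two_mul_sqrt_lt_sub_cos ha hal hb hbm hr0 hr t)

lemma joukowski_arcRoot :
    joukowski a l (arcRoot a l b m r t) = a + l + b + m - 2 * b * (r * Real.cos t) :=
  joukowski_realRoot ha (ha.trans hal) (two_mul_sqrt_lt_sub_cos ha hal hb hbm hr0 hr t)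

lemma hasDerivAt_arcRoot : HasDerivAt (arcRoot a l b m r)
    ((a - l / arcRoot a l b m r t ^ 2)⁻¹ * (2 * b * r * Real.sin t)) t := by
  have hcos : HasDerivAt (fun t => a + l + b + m - 2 * b * (r * Real.cos t))
      (2 * b * r * Real.sin t) t :=
    ((((Real.hasDerivAt_cos t).const_mul r).const_mul (2 * b)).const_sub _).congr_deriv (by ring)
  exact (hasDerivAt_realRoot ha (ha.trans hal)
    (two_mul_sqrt_lt_sub_cos ha hal hb hbm hr0 hr t)).comp t hcos

lemma arcRoot_sub_one_mul : (arcRoot a l b m r t - 1) * (l - a * arcRoot a l b m r t)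
    = -(arcRoot a l b m r t * (b + m - 2 * b * r * Real.cos t)) := by
  have h := joukowski_arcRoot ha hal hb hbm hr0 hr t
  have hx := (arcRoot_pos ha hal hb hbm hr0 hr t).ne'
  unfold joukowski at h
  field_simp at h
  linear_combination -h

lemma sub_mul_arcRoot_pos : 0 < l - a * arcRoot a l b m r t := by
  have h := re_sub_mul_pos ha hal (x := (arcRoot a l b m r t : ℂ))
    (by simpa using (mul_arcRoot_sq_lt ha hal hb hbm hr0 hr t).le)
  rwa [re_ofReal_sub_mul, ofReal_re] at h

lemma kernelRoot_circleMap :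
    kernelRoot a l b m (circleMap 0 r t) = (arcRoot a l b m r t : ℂ) := by
  rw [kernelRoot_eq_ofReal ha hal hb hbm hr0 hr (norm_circleMap_zero_of_pos hr0 t),
    circleMap_zero_re, arcRoot]

end Arc

section Evaluation

variable {la1 la2 mu1 mu2 c1 c2 p1 p2 r t x1 x2 : ℝ}

/-- The integrand in the definition of `phiY1`. -/
noncomputable def phiIntegrand (la1 la2 mu1 mu2 c1 c2 p1 p2 x : ℝ) : ℝ :=
  (mu1 * c1 * x ^ 2 - la1) * ThetaY la1 la2 mu1 mu2 c1 c2 p1 p2 x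
    / (x * h1r la1 la2 mu1 mu2 c1 c2 x 1)

lemma joukowski_eq_or_eq_of_Delta2_eq_zero {x : ℝ} (hr : mu2 * c2 * r ^ 2 = la2) (hx : x ≠ 0)
    (hD : Delta2 la1 la2 mu1 mu2 c1 c2 x = 0) :
    joukowski (mu1 * c1) la1 x = mu1 * c1 + la1 + mu2 * c2 + la2 + 2 * (mu2 * c2) * r ∨
      joukowski (mu1 * c1) la1 x = mu1 * c1 + la1 + mu2 * c2 + la2 - 2 * (mu2 * c2) * r := by
  set S := mu1 * c1 + la1 + mu2 * c2 + la2
  have hfac : (joukowski (mu1 * c1) la1 x - (S + 2 * (mu2 * c2) * r))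
      * (joukowski (mu1 * c1) la1 x - (S - 2 * (mu2 * c2) * r)) = 0 := by
    unfold joukowski
    field_simp
    unfold Delta2 at hD
    linear_combination hD - 4 * (mu2 * c2) * x ^ 2 * hr
  simpa only [mul_eq_zero, sub_eq_zero] using hfac

lemma joukowski_eq_of_Delta2_eq_zero (ha : 0 < mu1 * c1) (hal : mu1 * c1 < la1)
    (hb : 0 < mu2 * c2) (hr0 : 0 < r) (hr : mu2 * c2 * r ^ 2 = la2)
    (hx1 : 0 < x1) (hx12 : x1 < x2) (hx2 : x2 < 1)
    (hD1 : Delta2 la1 la2 mu1 mu2 c1 c2 x1 = 0) (hD2 : Delta2 la1 la2 mu1 mu2 c1 c2 x2 = 0) :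
    joukowski (mu1 * c1) la1 x1 = mu1 * c1 + la1 + mu2 * c2 + la2 + 2 * (mu2 * c2) * r ∧
      joukowski (mu1 * c1) la1 x2 = mu1 * c1 + la1 + mu2 * c2 + la2 - 2 * (mu2 * c2) * r := by
  have hx20 := hx1.trans hx12
  have hlt := strictAntiOn_joukowski ha
    ⟨hx1, (mul_sq_lt_of_le_one ha hal hx1.le (hx12.trans hx2).le).le⟩
    ⟨hx20, (mul_sq_lt_of_le_one ha hal hx20.le hx2.le).le⟩ hx12
  have hbr : 0 < 2 * (mu2 * c2) * r := by positivity
  rcases joukowski_eq_or_eq_of_Delta2_eq_zero hr hx1.ne' hD1 with h1 | h1 <;>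
    rcases joukowski_eq_or_eq_of_Delta2_eq_zero hr hx20.ne' hD2 with h2 | h2 <;>
    first | exact ⟨h1, h2⟩ | linarith

variable (ha : 0 < mu1 * c1) (hal : mu1 * c1 < la1) (hb : 0 < mu2 * c2) (hbm : mu2 * c2 < la2)
  (hr0 : 0 < r) (hr : mu2 * c2 * r ^ 2 = la2)

include ha hal hb hbm hr0 hr

lemma phiIntegrand_arcRoot_mul (t : ℝ) :
    phiIntegrand la1 la2 mu1 mu2 c1 c2 p1 p2 (arcRoot (mu1 * c1) la1 (mu2 * c2) la2 r t)
        * ((mu1 * c1 - la1 / arcRoot (mu1 * c1) la1 (mu2 * c2) la2 r t ^ 2)⁻¹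
          * (2 * (mu2 * c2) * r * Real.sin t))
      = -(ThetaY la1 la2 mu1 mu2 c1 c2 p1 p2 (arcRoot (mu1 * c1) la1 (mu2 * c2) la2 r t)
        * slitKernel (mu2 * c2) r (mu2 * c2 + la2) t) := by
  have hker := arcRoot_sub_one_mul ha hal hb hbm hr0 hr t
  have hx := (arcRoot_pos ha hal hb hbm hr0 hr t).ne'
  have hxl := (sub_neg.2 (mul_arcRoot_sq_lt ha hal hb hbm hr0 hr t)).ne
  rw [phiIntegrand, h1r_one, hker, slitKernel]
  generalize arcRoot (mu1 * c1) la1 (mu2 * c2) la2 r t = x at *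
  rw [show mu1 * c1 - la1 / x ^ 2 = (mu1 * c1 * x ^ 2 - la1) / x ^ 2 by field_simp]
  field_simp

variable (hp1 : 0 ≤ p1) (hp2 : 0 ≤ p2)

include hp1 hp2

lemma thetaDenom_arcRoot_pos (t : ℝ) :
    0 < thetaDenom la1 la2 mu1 mu2 c1 c2 p1 p2 (arcRoot (mu1 * c1) la1 (mu2 * c2) la2 r t) := by
  have hy : mu2 * c2 * ‖circleMap 0 r t‖ ^ 2 = la2 := by rwa [norm_circleMap_zero_of_pos hr0]
  have hv := re_sub_mul_pos hb hbm hy.le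
  have hJ := joukowski_arcRoot ha hal hb hbm hr0 hr t
  rw [re_ofReal_sub_mul] at hv
  rw [← circleMap_zero_re] at hJ
  exact thetaDenom_pos hp1 hp2 (arcRoot_pos ha hal hb hbm hr0 hr t)
    (sub_mul_arcRoot_pos ha hal hb hbm hr0 hr t) hv hy hJ

lemma im_logCoupling_circleMap (ht : t ∈ Icc 0 Real.pi) :
    (logCoupling (mu1 * c1) la1 (mu2 * c2) la2 p1 p2 (circleMap 0 r t)).im
      = ThetaY la1 la2 mu1 mu2 c1 c2 p1 p2 (arcRoot (mu1 * c1) la1 (mu2 * c2) la2 r t) := by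
  have hy : mu2 * c2 * ‖circleMap 0 r t‖ ^ 2 = la2 := by rwa [norm_circleMap_zero_of_pos hr0]
  have hv := re_sub_mul_pos hb hbm hy.le
  have hJ := joukowski_arcRoot ha hal hb hbm hr0 hr t
  rw [re_ofReal_sub_mul] at hv
  rw [← circleMap_zero_re] at hJ
  have him : 0 ≤ (circleMap 0 r t).im := by
    rw [circleMap_zero_im]
    exact mul_nonneg hr0.le (Real.sin_nonneg_of_mem_Icc ht)
  rw [logCoupling, log_im, kernelRoot_circleMap ha hal hb hbm hr0 hr t,
    ← arg_couplingRatio_eq_ThetaY hb.le hp1 hp2 (arcRoot_pos ha hal hb hbm hr0 hr t)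
      (sub_mul_arcRoot_pos ha hal hb hbm hr0 hr t) hv hy him hJ]
  push_cast
  rfl

lemma continuousAt_phiIntegrand_arcRoot (t : ℝ) :
    ContinuousAt (phiIntegrand la1 la2 mu1 mu2 c1 c2 p1 p2)
      (arcRoot (mu1 * c1) la1 (mu2 * c2) la2 r t) := by
  have hx := (arcRoot_pos ha hal hb hbm hr0 hr t).ne'
  have hΘ := continuousAt_ThetaY (thetaDenom_arcRoot_pos ha hal hb hbm hr0 hr hp1 hp2 t).ne'
  have hden : arcRoot (mu1 * c1) la1 (mu2 * c2) la2 r t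
      * h1r la1 la2 mu1 mu2 c1 c2 (arcRoot (mu1 * c1) la1 (mu2 * c2) la2 r t) 1 ≠ 0 := by
    rw [h1r_one, arcRoot_sub_one_mul ha hal hb hbm hr0 hr]
    exact mul_ne_zero hx (neg_ne_zero.2
      (mul_ne_zero hx (sub_pos.2 (mul_cos_lt_add hb hbm hr0 hr t)).ne'))
  unfold phiIntegrand
  refine ContinuousAt.div (by fun_prop) ?_ hden
  unfold h1r
  fun_prop

lemma integral_ThetaY_arcRoot :
    ∫ t in (0 : ℝ)..Real.pi,
        ThetaY la1 la2 mu1 mu2 c1 c2 p1 p2 (arcRoot (mu1 * c1) la1 (mu2 * c2) la2 r t)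
          * slitKernel (mu2 * c2) r (mu2 * c2 + la2) t
      = ∫ x in arcRoot (mu1 * c1) la1 (mu2 * c2) la2 r Real.pi..
          arcRoot (mu1 * c1) la1 (mu2 * c2) la2 r 0,
        phiIntegrand la1 la2 mu1 mu2 c1 c2 p1 p2 x := by
  have hderiv := hasDerivAt_arcRoot ha hal hb hbm hr0 hr
  have hcont : Continuous (arcRoot (mu1 * c1) la1 (mu2 * c2) la2 r) :=
    continuous_iff_continuousAt.2 fun t => (hderiv t).continuousAt
  rw [intervalIntegral.integral_symm, ← intervalIntegral.integral_comp_mul_deriv''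
    hcont.continuousOn (fun t _ => (hderiv t).hasDerivWithinAt) (Continuous.continuousOn ?_) ?_]
  · rw [← intervalIntegral.integral_neg]
    refine intervalIntegral.integral_congr fun t _ => ?_
    simp only [Function.comp_apply]
    rw [phiIntegrand_arcRoot_mul ha hal hb hbm hr0 hr]
  · refine Continuous.mul (Continuous.inv₀ ?_ fun t => ?_) (by fun_prop)
    · exact continuous_const.sub (continuous_const.div (hcont.pow 2) fun t =>
        pow_ne_zero 2 (arcRoot_pos ha hal hb hbm hr0 hr t).ne')
    · rw [sub_ne_zero, Ne, eq_div_iff (pow_ne_zero 2 (arcRoot_pos ha hal hb hbm hr0 hr t).ne')]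
      exact (mul_arcRoot_sq_lt ha hal hb hbm hr0 hr t).ne
  · rintro _ ⟨t, -, rfl⟩
    exact (continuousAt_phiIntegrand_arcRoot ha hal hb hbm hr0 hr hp1 hp2 t).continuousWithinAt

lemma ofReal_phiY1_eq_exp_ellipseInt (hx1 : 0 < x1) (hx12 : x1 < x2) (hx2 : x2 < 1)
    (hD1 : Delta2 la1 la2 mu1 mu2 c1 c2 x1 = 0) (hD2 : Delta2 la1 la2 mu1 mu2 c1 c2 x2 = 0) :
    (phiY1 la1 la2 mu1 mu2 c1 c2 p1 p2 x1 x2 : ℂ)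
      = exp (ellipseInt (mu2 * c2 : ℝ) la2 r (logCoupling (mu1 * c1) la1 (mu2 * c2) la2 p1 p2)
        ((mu2 * c2 : ℝ) + la2)) := by
  obtain ⟨hJ1, hJ2⟩ := joukowski_eq_of_Delta2_eq_zero ha hal hb hr0 hr hx1 hx12 hx2
    hD1 hD2
  have hroot1 : arcRoot (mu1 * c1) la1 (mu2 * c2) la2 r Real.pi = x1 :=
    arcRoot_eq ha hal hx1 (hx12.trans hx2) (by rw [hJ1, Real.cos_pi]; ring)
  have hroot2 : arcRoot (mu1 * c1) la1 (mu2 * c2) la2 r 0 = x2 :=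
    arcRoot_eq ha hal (hx1.trans hx12) hx2 (by rw [hJ2, Real.cos_zero]; ring)
  have hphi : phiY1 la1 la2 mu1 mu2 c1 c2 p1 p2 x1 x2 = Real.exp (1 / Real.pi *
      ∫ x in x1..x2, phiIntegrand la1 la2 mu1 mu2 c1 c2 p1 p2 x) := rfl
  have hint := integral_ThetaY_arcRoot ha hal hb hbm hr0 hr hp1 hp2
  rw [hroot1, hroot2] at hint
  rw [← ofReal_add, ellipseInt_eq_ofReal hr0 hr (mul_cos_lt_add hb hbm hr0 hr)
      (continuousOn_logCoupling_sphere ha hal hb hbm hp1 hp2 hr0 hr)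
      (fun _ => logCoupling_conj ha hal hb hbm hp1 hp2 hr0 hr), ← ofReal_exp, hphi,
    ← hint]
  congr 3
  refine intervalIntegral.integral_congr fun t ht => ?_
  rw [uIcc_of_le Real.pi_pos.le] at ht
  simp only [im_logCoupling_circleMap ha hal hb hbm hr0 hr hp1 hp2 ht]

end Evaluation

end KernelMethod

theorem stmt16_general (la1 la2 mu1 mu2 c1 c2 p1 p2 x1 x2 : ℝ)
    (ha : 0 < mu1 * c1) (hb : 0 < mu2 * c2) (hE1 : mu1 * c1 < la1) (hE2 : mu2 * c2 < la2)
    (hp1 : 0 ≤ p1) (hp2 : 0 ≤ p2) (hx1 : 0 < x1) (hx12 : x1 < x2) (hx2 : x2 < 1)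
    (hD1 : Delta2 la1 la2 mu1 mu2 c1 c2 x1 = 0)
    (hD2 : Delta2 la1 la2 mu1 mu2 c1 c2 x2 = 0)
    (π : ℕ × ℕ → ℝ) (hπ : IsInvariantDist la1 la2 mu1 mu2 c1 c2 p1 p2 π) :
    π (0, 0) = (la1 + la2 * p2 - (mu1 * c1 + mu2 * c2 * p2))
        / ((la1 + la2 * p2) * phiY1 la1 la2 mu1 mu2 c1 c2 p1 p2 x1 x2) := by
  have hla1 := ha.trans hE1
  have hla2 := hb.trans hE2
  have hr0 : 0 < √(la2 / (mu2 * c2)) := by positivity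
  have hr : mu2 * c2 * √(la2 / (mu2 * c2)) ^ 2 = la2 := by
    rw [Real.sq_sqrt (by positivity), mul_div_cancel₀ _ hb.ne']
  have hdrift := hπ.marginal_drift_eq_mul_cexp ha hE1 hb hE2 hp1 hp2 hr0 hr
  rw [← ofReal_phiY1_eq_exp_ellipseInt ha hE1 hb hE2 hr0 hr hp1 hp2 hx1 hx12 hx2 hD1 hD2,
    ← Complex.ofReal_mul, Complex.ofReal_inj] at hdrift
  have hpos : 0 < (la1 + la2 * p2) * phiY1 la1 la2 mu1 mu2 c1 c2 p1 p2 x1 x2 :=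
    mul_pos (by positivity) (Real.exp_pos _)
  rw [hdrift, eq_div_iff hpos.ne']
  ring

theorem stmt16 (la1 la2 mu1 mu2 c1 c2 p1 p2 x1 x2 : ℝ)
    (hla1 : 0 < la1) (hla2 : 0 < la2) (hmu1 : 0 < mu1) (hmu2 : 0 < mu2)
    (hc1 : 0 < c1) (hc2 : 0 < c2)
    (hp1 : 0 ≤ p1) (hp1' : p1 ≤ 1) (hp2 : 0 ≤ p2) (hp2' : p2 ≤ 1)
    (hE1 : mu1 * c1 < la1) (hE2 : mu2 * c2 < la2) (hp : p1 * p2 < 1)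
    (hx1 : 0 < x1) (hx12 : x1 < x2) (hx2 : x2 < 1)
    (hD1 : Delta2 la1 la2 mu1 mu2 c1 c2 x1 = 0)
    (hD2 : Delta2 la1 la2 mu1 mu2 c1 c2 x2 = 0)
    (hDneg : ∀ x ∈ Set.Ioo x1 x2, Delta2 la1 la2 mu1 mu2 c1 c2 x < 0)
    (π : ℕ × ℕ → ℝ) (hπ : IsInvariantDist la1 la2 mu1 mu2 c1 c2 p1 p2 π) :
    π (0, 0) = (la1 + la2 * p2 - (mu1 * c1 + mu2 * c2 * p2))
        / ((la1 + la2 * p2) * phiY1 la1 la2 mu1 mu2 c1 c2 p1 p2 x1 x2) :=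
  stmt16_general la1 la2 mu1 mu2 c1 c2 p1 p2 x1 x2 (mul_pos hmu1 hc1) (mul_pos hmu2 hc2) hE1 hE2
    hp1 hp2 hx1 hx12 hx2 hD1 hD2 π hπ
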